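/- arXiv:1409.3865 — 3 statements merged into one kernel-verified Lean document; each statement's English description precedes it below -/
import Mathlib

section
/- An infinite binary sequence ω is Martin-Löf random with respect to the uniform Bernoulli measure if and only if it passes every Solovay test of randomness, i.e., for every computable sequence of binary strings (x_n) with ∑_n 2^{-|x_n|} < ∞, only finitely many x_n are prefixes of ω. -/
open MeasureTheory Filter

/-- The cylinder set determined by a finite binary string. -/
def Cyl (x : List Bool) : Set (ℕ → Bool) :=
  {ω | ∀ i : Fin x.length, ω i = x.get i}

/-- The length-`n` prefix of an infinite binary sequence. -/
def Pre (ω : ℕ → Bool) (n : ℕ) : List Bool := (List.range n).map ω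

/-- `x` is a prefix of the infinite sequence `ω`. -/
def PrefixOf (x : List Bool) (ω : ℕ → Bool) : Prop :=
  ∀ i : Fin x.length, ω i = x.get i

/-- `μ` is the uniform Bernoulli measure `B_{1/2}` on Cantor space. -/
def UniformMeasure (μ : Measure (ℕ → Bool)) : Prop :=
  ∀ x : List Bool, μ (Cyl x) = (2 : ENNReal)⁻¹ ^ x.length

/-- A Solovay test: a computable sequence of strings whose weights form a convergent series. -/
def SolovayTest (x : ℕ → List Bool) : Prop :=
  Computable x ∧ Summable (fun n => (2 : ℝ) ^ (-((x n).length : ℤ)))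

/-- `ω` passes the Solovay test `x`: only finitely many `x n` are prefixes of `ω`. -/
def PassesSolovay (x : ℕ → List Bool) (ω : ℕ → Bool) : Prop :=
  {n | PrefixOf (x n) ω}.Finite

/-- A total Solovay test: the series converges with a computable rate of convergence. -/
def TotalSolovayTest (x : ℕ → List Bool) : Prop :=
  SolovayTest x ∧ ∃ m : ℚ → ℕ, Computable m ∧
    ∀ δ : ℚ, 0 < δ → ∑' n : {n : ℕ // m δ ≤ n}, (2 : ℝ) ^ (-((x n.1).length : ℤ)) ≤ (δ : ℝ)

/-- The effectively open set enumerated by the `n`-th row of `f`. -/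
def EffOpen (f : ℕ → ℕ → List Bool) (n : ℕ) : Set (ℕ → Bool) := ⋃ i, Cyl (f n i)

/-- A Martin-Löf test with respect to `μ`. -/
def MLTest (μ : Measure (ℕ → Bool)) (f : ℕ → ℕ → List Bool) : Prop :=
  Computable₂ f ∧ ∀ n, μ (EffOpen f n) ≤ (2 : ENNReal)⁻¹ ^ n

/-- A Schnorr test: a Martin-Löf test whose measures are uniformly computable reals. -/
def SchnorrTest (μ : Measure (ℕ → Bool)) (f : ℕ → ℕ → List Bool) : Prop :=
  MLTest μ f ∧ ∃ g : ℕ → ℚ → ℚ, Computable₂ g ∧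
    ∀ (n : ℕ) (ε : ℚ), 0 < ε → |(g n ε : ℝ) - (μ (EffOpen f n)).toReal| ≤ (ε : ℝ)

/-- Martin-Löf randomness with respect to `μ`. -/
def MLRandom (μ : Measure (ℕ → Bool)) (ω : ℕ → Bool) : Prop :=
  ∀ f, MLTest μ f → ∃ n, ω ∉ EffOpen f n

/-- Schnorr randomness with respect to `μ`. -/
def SchnorrRandom (μ : Measure (ℕ → Bool)) (ω : ℕ → Bool) : Prop :=
  ∀ f, SchnorrTest μ f → ∃ n, ω ∉ EffOpen f n

/-- A monotone machine: a partial computable monotone map on binary strings. -/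
def MonotoneMachine (ψ : List Bool →. List Bool) : Prop :=
  Partrec ψ ∧ ∀ p p' y y', y ∈ ψ p → y' ∈ ψ p' → p <+: p' → (y <+: y' ∨ y' <+: y)

/-- `Km` is the monotone Kolmogorov complexity determined by some optimal monotone machine. -/
def IsKm (Km : List Bool → ℕ) : Prop :=
  ∃ ψ : List Bool →. List Bool, MonotoneMachine ψ ∧
    (∀ x : List Bool, ∃ p y, y ∈ ψ p ∧ x <+: y ∧ p.length = Km x) ∧
    (∀ x p y, y ∈ ψ p → x <+: y → Km x ≤ p.length) ∧
    (∀ ψ' : List Bool →. List Bool, MonotoneMachine ψ' →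
      ∃ c : ℕ, ∀ x p y, y ∈ ψ' p → x <+: y → Km x ≤ p.length + c)

/-- A computable real-valued function on Cantor space. -/
def ComputableRealFn (f : (ℕ → Bool) → ℝ) : Prop :=
  ∃ F : List Bool → ℚ → ℚ, ∃ k : ℚ → ℕ, Computable₂ F ∧ Computable k ∧
    ∀ (ω : ℕ → Bool) (ε : ℚ), 0 < ε → |(F (Pre ω (k ε)) ε : ℝ) - f ω| ≤ (ε : ℝ)

/-- A computable transformation of Cantor space, induced by a monotone machine. -/
def ComputableTrans (T : (ℕ → Bool) → (ℕ → Bool)) : Prop :=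
  ∃ ψ : List Bool →. List Bool, MonotoneMachine ψ ∧
    ∀ ω : ℕ → Bool, (∀ n y, y ∈ ψ (Pre ω n) → y = Pre (T ω) y.length) ∧
      (∀ k, ∃ n y, y ∈ ψ (Pre ω n) ∧ k ≤ y.length)


theorem sv_comp_sum {α : Type*} [Primcodable α] {b : α → ℕ} {g : α → ℕ → ℕ}
    (hb : Computable b) (hg : Computable₂ g) :
    Computable fun a => ∑ k ∈ Finset.range (b a), g a k := by
  have := Computable.nat_rec (h := fun a (p : ℕ × ℕ) => p.2 + g a p.1) hb
    (Computable.const 0)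
    (Computable₂.mk (Primrec.nat_add.to_comp.comp (Computable.snd.comp Computable.snd)
      (hg.comp Computable.fst (Computable.fst.comp Computable.snd))))
  refine this.of_eq fun a => ?_
  induction b a with
  | zero => simp
  | succ n ih => simp only [Finset.sum_range_succ, ← ih]

theorem sv_comp_eq {α β : Type*} [Primcodable α] [Primcodable β] [DecidableEq β]
    {f g : α → β} (hf : Computable f) (hg : Computable g) :
    Computable fun a => decide (f a = g a) := by
  have h : Primrec₂ fun a b : β => decide (a = b) := Primrec.eq.decide
  exact h.to_comp.comp hf hg

theorem sv_comp_le {α : Type*} [Primcodable α]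
    {f g : α → ℕ} (hf : Computable f) (hg : Computable g) :
    Computable fun a => decide (f a ≤ g a) := by
  have h : Primrec₂ fun a b : ℕ => decide (a ≤ b) := Primrec.nat_le.decide
  exact h.to_comp.comp hf hg

theorem sv_comp_and {α : Type*} [Primcodable α]
    {f g : α → Bool} (hf : Computable f) (hg : Computable g) :
    Computable fun a => (f a && g a) := Primrec.and.to_comp.comp hf hg

def svPf (x z : List Bool) : Bool :=
  decide ((∑ k ∈ Finset.range x.length, cond (decide (x[k]? = z[k]?)) 0 1) = 0)

theorem sv_comp_pf {α : Type*} [Primcodable α] {f g : α → List Bool}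
    (hf : Computable f) (hg : Computable g) : Computable fun a => svPf (f a) (g a) := by
  refine sv_comp_eq (sv_comp_sum (Computable.list_length.comp hf) ?_) (Computable.const 0)
  refine Computable₂.mk (Computable.cond (sv_comp_eq ?_ ?_) (Computable.const 0) (Computable.const 1))
  · exact Computable.list_getElem?.comp (hf.comp Computable.fst) Computable.snd
  · exact Computable.list_getElem?.comp (hg.comp Computable.fst) Computable.snd

theorem sv_pf_iff (x z : List Bool) : svPf x z = true ↔ x <+: z := by
  simp only [svPf, decide_eq_true_eq, Finset.sum_eq_zero_iff, Finset.mem_range,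
    List.prefix_iff_getElem?]
  refine forall₂_congr fun i hi => ?_
  by_cases h : x[i]? = z[i]?
  · simp [← h, hi]
  · simp only [h, decide_false, cond_false, one_ne_zero, false_iff]
    intro h'
    exact h (by rw [h']; simp [hi])

theorem sv_prefixOf_iff (x : List Bool) (ω : ℕ → Bool) :
    PrefixOf x ω ↔ ∀ i < x.length, x[i]? = some (ω i) := by
  unfold PrefixOf
  constructor
  · intro h i hi
    simpa [hi] using (h ⟨i, hi⟩).symm
  · rintro h ⟨i, hi⟩
    simpa [hi] using (h i hi).symm

theorem sv_prefixOf_mono {x z : List Bool} {ω : ℕ → Bool} (hz : PrefixOf z ω) (h : x <+: z) :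
    PrefixOf x ω := by
  rw [sv_prefixOf_iff] at *
  rw [List.prefix_iff_getElem?] at h
  intro i hi
  have h1 := h i hi
  have hi' : i < z.length := by
    by_contra hc
    simp [List.getElem?_eq_none (not_lt.1 hc)] at h1
  rw [← hz i hi', h1]; simp [hi]

theorem sv_prefix_of {x z : List Bool} {ω : ℕ → Bool} (hx : PrefixOf x ω) (hz : PrefixOf z ω)
    (h : x.length ≤ z.length) : x <+: z := by
  rw [sv_prefixOf_iff] at *
  rw [List.prefix_iff_getElem?]
  intro i hi
  rw [hz i (by omega), ← hx i hi]; simp [hi]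

theorem sv_prefixOf_pre (ω : ℕ → Bool) (n : ℕ) : PrefixOf (Pre ω n) ω := by
  rw [sv_prefixOf_iff]
  intro i hi
  simp [Pre] at hi ⊢
  simp [hi]

theorem sv_pre_length (ω : ℕ → Bool) (n : ℕ) : (Pre ω n).length = n := by simp [Pre]

theorem sv_meas (x : List Bool) : MeasurableSet (Cyl x) := by
  have : Cyl x = ⋂ i : Fin x.length, (fun ω : ℕ → Bool => ω i) ⁻¹' {x.get i} := by
    ext ω; simp [Cyl]
  rw [this]
  exact MeasurableSet.iInter fun i => measurable_pi_apply _ (MeasurableSet.singleton _)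

def svDec (e : ℕ) : List Bool := (Encodable.decode (α := List Bool) e).getD []

theorem sv_comp_dec : Computable svDec :=
  Computable.option_getD Computable.decode (Computable.const [])

theorem sv_dec_encode (z : List Bool) : svDec (Encodable.encode z) = z := by simp [svDec]

theorem sv_comp_rep : Computable fun n : ℕ => List.replicate n false := by
  have := Computable.nat_rec (f := fun n : ℕ => n) (g := fun _ => ([] : List Bool))
    (h := fun _ (p : ℕ × List Bool) => false :: p.2) Computable.id (Computable.const [])
    (Computable₂.mk (Computable.list_cons.comp (Computable.const false)
      (Computable.snd.comp Computable.snd)))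
  refine this.of_eq fun n => ?_
  induction n with
  | zero => rfl
  | succ n ih => simp only [List.replicate_succ, ← ih]

theorem sv_comp_pow : Computable fun n : ℕ => 2 ^ n := by
  have := Computable.nat_rec (f := fun n : ℕ => n) (g := fun _ => 1)
    (h := fun _ (p : ℕ × ℕ) => p.2 + p.2) Computable.id (Computable.const 1)
    (Computable₂.mk (Primrec.nat_add.to_comp.comp
      (Computable.snd.comp Computable.snd) (Computable.snd.comp Computable.snd)))
  refine this.of_eq fun n => ?_
  induction n with
  | zero => rfl
  | succ n ih => simp only [pow_succ, ← ih]; ring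

theorem sv_weight (n : ℕ) : ENNReal.ofReal ((2 : ℝ) ^ (-(n : ℤ))) = (2 : ENNReal)⁻¹ ^ n := by
  rw [zpow_neg, zpow_natCast, ENNReal.ofReal_inv_of_pos (by positivity),
    ENNReal.ofReal_pow (by norm_num), ENNReal.inv_pow]
  simp

theorem sv_summable_iff (x : ℕ → List Bool) :
    Summable (fun n => (2 : ℝ) ^ (-((x n).length : ℤ))) ↔
      ∑' n, (2 : ENNReal)⁻¹ ^ (x n).length ≠ ⊤ := by
  simp_rw [← sv_weight]
  constructor
  · exact fun h => h.tsum_ofReal_ne_top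
  · intro h
    have := ENNReal.summable_toReal h
    refine this.congr fun n => ?_
    rw [ENNReal.toReal_ofReal (by positivity)]

/-- The Martin-Löf test associated with a Solovay test. -/
def svTest (x : ℕ → List Bool) (c n i : ℕ) : List Bool :=
  cond (decide (2 ^ (n + 1 + c) ≤
    ∑ k ∈ Finset.range (svDec i).length, cond (svPf (x k) (svDec i)) 1 0))
    (svDec i) (List.replicate (n + 1) false)

theorem sv_test_comp {x : ℕ → List Bool} (hx : Computable x) (c : ℕ) :
    Computable₂ (svTest x c) := by
  have hz : Computable fun p : ℕ × ℕ => svDec p.2 := sv_comp_dec.comp Computable.snd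
  have hn : Computable fun p : ℕ × ℕ => p.1 + 1 := Computable.succ.comp Computable.fst
  refine Computable₂.mk (Computable.cond (sv_comp_le ?_ ?_) hz (sv_comp_rep.comp hn))
  · exact sv_comp_pow.comp (Primrec.nat_add.to_comp.comp hn (Computable.const c))
  · refine sv_comp_sum (Computable.list_length.comp hz) ?_
    exact Computable₂.mk (Computable.cond (sv_comp_pf (hx.comp Computable.snd)
      (hz.comp Computable.fst)) (Computable.const 1) (Computable.const 0))

theorem sv_test_meas (μ : Measure (ℕ → Bool)) (hμ : UniformMeasure μ) {x : ℕ → List Bool} {c : ℕ}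
    (hc : ∑' n, (2 : ENNReal)⁻¹ ^ (x n).length ≤ 2 ^ c) (n : ℕ) :
    μ (EffOpen (svTest x c) n) ≤ (2 : ENNReal)⁻¹ ^ n := by
  set h : (ℕ → Bool) → ENNReal := fun α => ∑' k, (Cyl (x k)).indicator 1 α with hh
  have hm : ∀ k, Measurable ((Cyl (x k)).indicator (1 : (ℕ → Bool) → ENNReal)) :=
    fun k => measurable_one.indicator (sv_meas _)
  have hint : ∫⁻ a, h a ∂μ ≤ 2 ^ c := by
    rw [hh, lintegral_tsum fun k => (hm k).aemeasurable]
    simp_rw [lintegral_indicator_one (sv_meas _), hμ _]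
    exact hc
  have hmk := (mul_meas_ge_le_lintegral (μ := μ) (Measurable.tsum hm) (2 ^ (n + 1 + c))).trans hint
  have hA : μ {a | (2 : ENNReal) ^ (n + 1 + c) ≤ h a} ≤ (2 : ENNReal)⁻¹ ^ (n + 1) := by
    have hmk' : (2 : ENNReal) ^ (n + 1 + c) * μ {a | (2 : ENNReal) ^ (n + 1 + c) ≤ h a} ≤ 2 ^ c := hmk
    generalize μ {a | (2 : ENNReal) ^ (n + 1 + c) ≤ h a} = t at hmk' ⊢
    rw [pow_add, mul_comm (2 ^ (n + 1)), mul_assoc] at hmk'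
    have h1 : (2 : ENNReal) ^ (n + 1) * t ≤ 1 := by
      rw [← ENNReal.mul_le_mul_iff_right (a := (2 : ENNReal) ^ c) (by simp) (by simp), mul_one]
      exact hmk'
    rw [← ENNReal.inv_pow]
    rw [ENNReal.le_inv_iff_mul_le, mul_comm]
    exact h1
  have hsub : EffOpen (svTest x c) n ⊆ Cyl (List.replicate (n + 1) false) ∪
      {a | (2 : ENNReal) ^ (n + 1 + c) ≤ h a} := by
    intro α hα
    obtain ⟨i, hi⟩ := Set.mem_iUnion.1 hα
    unfold svTest at hi
    by_cases hd : 2 ^ (n + 1 + c) ≤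
      ∑ k ∈ Finset.range (svDec i).length, cond (svPf (x k) (svDec i)) 1 0
    · right
      simp only [hd, decide_true, cond_true] at hi
      have h1 : ((2 ^ (n + 1 + c) : ℕ) : ENNReal) ≤ _ := Nat.cast_le.2 hd
      rw [Set.mem_ofPred_eq]
      push_cast at h1
      refine h1.trans ((Finset.sum_le_sum fun k _ => ?_).trans
        (ENNReal.sum_le_tsum (Finset.range (svDec i).length)))
      cases hp : svPf (x k) (svDec i) with
      | false => simp
      | true =>
        have : α ∈ Cyl (x k) := sv_prefixOf_mono hi ((sv_pf_iff _ _).1 hp)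
        simp [this]
    · left
      simpa only [hd, decide_false, cond_false] using hi
  calc μ (EffOpen (svTest x c) n) ≤ _ := measure_mono hsub
    _ ≤ _ := measure_union_le _ _
    _ ≤ (2 : ENNReal)⁻¹ ^ (n + 1) + (2 : ENNReal)⁻¹ ^ (n + 1) := by
        gcongr
        rw [hμ]; simp
    _ = _ := by
        rw [pow_succ, ← mul_add, ENNReal.inv_two_add_inv_two, mul_one]

theorem sv_forward (μ : Measure (ℕ → Bool)) (hμ : UniformMeasure μ)
    (ω : ℕ → Bool) (h : MLRandom μ ω) (x : ℕ → List Bool) (hx : SolovayTest x) :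
    PassesSolovay x ω := by
  by_contra hinf
  have hS := (sv_summable_iff x).1 hx.2
  obtain ⟨m, hm⟩ := ENNReal.exists_nat_gt hS
  have hc : ∑' n, (2 : ENNReal)⁻¹ ^ (x n).length ≤ 2 ^ m := by
    refine hm.le.trans ?_
    exact_mod_cast (Nat.lt_two_pow_self).le
  obtain ⟨n, hn⟩ := h (svTest x m) ⟨sv_test_comp hx.1 m, sv_test_meas μ hμ hc⟩
  apply hn
  have hinf' : {n | PrefixOf (x n) ω}.Infinite := hinf
  obtain ⟨t, ht, htc⟩ := hinf'.exists_subset_card_eq (2 ^ (n + 1 + m))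
  set M := ∑ k ∈ t, (k + 1 + (x k).length) with hM
  have hkM : ∀ k ∈ t, k + 1 + (x k).length ≤ M := fun k hk =>
    Finset.single_le_sum (f := fun k => k + 1 + (x k).length) (fun _ _ => Nat.zero_le _) hk
  refine Set.mem_iUnion.2 ⟨Encodable.encode (Pre ω M), ?_⟩
  unfold svTest
  rw [sv_dec_encode, sv_pre_length]
  have hd : 2 ^ (n + 1 + m) ≤
      ∑ k ∈ Finset.range M, cond (svPf (x k) (Pre ω M)) 1 0 := by
    rw [← htc, Finset.card_eq_sum_ones]
    calc ∑ k ∈ t, 1 ≤ ∑ k ∈ t, cond (svPf (x k) (Pre ω M)) 1 0 := by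
          refine Finset.sum_le_sum fun k hk => ?_
          have : svPf (x k) (Pre ω M) = true := by
            rw [sv_pf_iff]
            refine sv_prefix_of (ht hk) (sv_prefixOf_pre _ _) ?_
            rw [sv_pre_length]; have := hkM k hk; omega
          simp [this]
      _ ≤ _ := by
          refine Finset.sum_le_sum_of_subset fun k hk => ?_
          have := hkM k hk
          simp; omega
  simp only [hd, decide_true, cond_true]
  exact sv_prefixOf_pre _ _

/-- The string with code `e` is a piece of the `i`-th cylinder of row `n`, disjoint from
the earlier ones. -/
def svGood (f : ℕ → ℕ → List Bool) (n i e : ℕ) : Bool :=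
  (decide (Encodable.encode (svDec e) = e) &&
    decide ((svDec e).length = ∑ k ∈ Finset.range (i + 1), (f n k).length)) &&
  (svPf (f n i) (svDec e) &&
    decide ((∑ k ∈ Finset.range i, cond (svPf (f n k) (svDec e)) 1 0) = 0))

theorem sv_good_iff (f : ℕ → ℕ → List Bool) (n i e : ℕ) : svGood f n i e = true ↔
    (Encodable.encode (svDec e) = e ∧
    (svDec e).length = ∑ k ∈ Finset.range (i + 1), (f n k).length) ∧
    f n i <+: svDec e ∧ ∀ k < i, ¬ f n k <+: svDec e := by
  simp only [svGood, Bool.and_eq_true, decide_eq_true_eq, sv_pf_iff, Finset.sum_eq_zero_iff,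
    Finset.mem_range]
  refine and_congr_right fun _ => and_congr_right fun _ => forall₂_congr fun k _ => ?_
  rw [← sv_pf_iff]
  cases svPf (f n k) (svDec e) <;> simp

def svSol (f : ℕ → ℕ → List Bool) (m : ℕ) : List Bool :=
  cond (svGood f m.unpair.1 m.unpair.2.unpair.1 m.unpair.2.unpair.2)
    (svDec m.unpair.2.unpair.2) (List.replicate m false)

theorem sv_sol_comp {f : ℕ → ℕ → List Bool} (hf : Computable₂ f) : Computable (svSol f) := by
  have hn : Computable fun m : ℕ => m.unpair.1 := Computable.fst.comp Computable.unpair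
  have h2 : Computable fun m : ℕ => m.unpair.2 := Computable.snd.comp Computable.unpair
  have hi : Computable fun m : ℕ => m.unpair.2.unpair.1 := hn.comp h2
  have he : Computable fun m : ℕ => m.unpair.2.unpair.2 := h2.comp h2
  have hz := sv_comp_dec.comp he
  refine Computable.cond ?_ hz sv_comp_rep
  refine sv_comp_and (sv_comp_and ?_ ?_) (sv_comp_and ?_ ?_)
  · exact sv_comp_eq (Computable.encode.comp hz) he
  · refine sv_comp_eq (Computable.list_length.comp hz)
      (sv_comp_sum (Computable.succ.comp hi) ?_)
    exact Computable₂.mk (Computable.list_length.comp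
      (hf.comp (hn.comp Computable.fst) Computable.snd))
  · exact sv_comp_pf (hf.comp hn hi) hz
  · refine sv_comp_eq (sv_comp_sum hi ?_) (Computable.const 0)
    exact Computable₂.mk (Computable.cond (sv_comp_pf
      (hf.comp (hn.comp Computable.fst) Computable.snd) (hz.comp Computable.fst))
      (Computable.const 1) (Computable.const 0))

def svPiece (f : ℕ → ℕ → List Bool) (n : ℕ) (p : ℕ × ℕ) : Set (ℕ → Bool) :=
  cond (svGood f n p.1 p.2) (Cyl (svDec p.2)) ∅

theorem sv_piece_mem {f : ℕ → ℕ → List Bool} {n : ℕ} {p : ℕ × ℕ} {α : ℕ → Bool}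
    (h : α ∈ svPiece f n p) : svGood f n p.1 p.2 = true ∧ PrefixOf (svDec p.2) α := by
  unfold svPiece at h
  cases hg : svGood f n p.1 p.2 with
  | false => simp [hg] at h
  | true => rw [hg] at h; exact ⟨rfl, h⟩

theorem sv_piece_lt {f : ℕ → ℕ → List Bool} {n : ℕ} {p q : ℕ × ℕ} {α : ℕ → Bool}
    (hp : α ∈ svPiece f n p) (hq : α ∈ svPiece f n q) : ¬ p.1 < q.1 := by
  intro hlt
  obtain ⟨gp, hp⟩ := sv_piece_mem hp
  obtain ⟨gq, hq⟩ := sv_piece_mem hq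
  rw [sv_good_iff] at gp gq
  refine gq.2.2 _ hlt (sv_prefix_of (sv_prefixOf_mono hp gp.2.1) hq ?_)
  rw [gq.1.2]
  exact Finset.single_le_sum (f := fun k => (f n k).length) (fun _ _ => Nat.zero_le _)
    (Finset.mem_range.2 (by omega))

theorem sv_piece_disj (f : ℕ → ℕ → List Bool) (n : ℕ) :
    Pairwise (Function.onFun Disjoint (svPiece f n)) := by
  intro p q hpq
  refine Set.disjoint_left.2 fun α hp hq => hpq ?_
  have h1 : p.1 = q.1 := le_antisymm (not_lt.1 (sv_piece_lt hq hp)) (not_lt.1 (sv_piece_lt hp hq))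
  obtain ⟨gp, hp⟩ := sv_piece_mem hp
  obtain ⟨gq, hq⟩ := sv_piece_mem hq
  rw [sv_good_iff] at gp gq
  have hl : (svDec p.2).length = (svDec q.2).length := by rw [gp.1.2, gq.1.2, h1]
  have hz : svDec p.2 = svDec q.2 := (sv_prefix_of hp hq hl.le).eq_of_length hl
  refine Prod.ext h1 ?_
  rw [← gp.1.1, ← gq.1.1, hz]

theorem sv_sol_summable (μ : Measure (ℕ → Bool)) (hμ : UniformMeasure μ)
    {f : ℕ → ℕ → List Bool} (hf : ∀ n, μ (EffOpen f n) ≤ (2 : ENNReal)⁻¹ ^ n) :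
    ∑' m, (2 : ENNReal)⁻¹ ^ (svSol f m).length ≠ ⊤ := by
  have hgeo : ∑' n : ℕ, (2 : ENNReal)⁻¹ ^ n = 2 := by
    rw [ENNReal.tsum_geometric, ENNReal.one_sub_inv_two, inv_inv]
  have hrow : ∀ n, ∑' p, μ (svPiece f n p) ≤ (2 : ENNReal)⁻¹ ^ n := by
    intro n
    rw [← measure_iUnion (sv_piece_disj f n)]
    · refine (measure_mono ?_).trans (hf n)
      refine Set.iUnion_subset fun p α hα => ?_
      obtain ⟨gp, hp⟩ := sv_piece_mem hα
      rw [sv_good_iff] at gp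
      exact Set.mem_iUnion.2 ⟨p.1, sv_prefixOf_mono hp gp.2.1⟩
    · intro p
      unfold svPiece
      cases svGood f n p.1 p.2
      · exact MeasurableSet.empty
      · exact sv_meas _
  have hle : ∀ m, (2 : ENNReal)⁻¹ ^ (svSol f m).length ≤
      (2 : ENNReal)⁻¹ ^ m + μ (svPiece f m.unpair.1 m.unpair.2.unpair) := by
    intro m
    unfold svSol svPiece
    cases svGood f m.unpair.1 m.unpair.2.unpair.1 m.unpair.2.unpair.2
    · simp
    · simp only [cond_true]; rw [hμ]; exact le_add_self
  have h1 : ∑' m : ℕ, μ (svPiece f m.unpair.1 m.unpair.2.unpair) ≤ 2 := by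
    refine (Nat.pairEquiv.symm.tsum_eq
      (fun q : ℕ × ℕ => μ (svPiece f q.1 q.2.unpair))).le.trans ?_
    rw [ENNReal.tsum_prod', ← hgeo]
    refine ENNReal.tsum_le_tsum fun n => ?_
    have := Nat.pairEquiv.symm.tsum_eq (fun p => μ (svPiece f n p))
    exact this.le.trans (hrow n)
  refine ne_top_of_le_ne_top (b := 2 + 2) (by norm_num) ?_
  refine (ENNReal.tsum_le_tsum hle).trans ?_
  rw [ENNReal.tsum_add, hgeo]
  gcongr

theorem sv_backward (μ : Measure (ℕ → Bool)) (hμ : UniformMeasure μ)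
    (ω : ℕ → Bool) (h : ∀ x : ℕ → List Bool, SolovayTest x → PassesSolovay x ω) :
    MLRandom μ ω := by
  intro f hf
  by_contra! hω
  have hfin := h (svSol f) ⟨sv_sol_comp hf.1, (sv_summable_iff _).2 (sv_sol_summable μ hμ hf.2)⟩
  have key : ∀ n, ∃ q : ℕ, PrefixOf (svSol f (Nat.pair n q)) ω := by
    intro n
    have hex : ∃ i, PrefixOf (f n i) ω := Set.mem_iUnion.1 (hω n)
    classical
    set i := Nat.find hex
    have hi : PrefixOf (f n i) ω := Nat.find_spec hex
    set L := ∑ k ∈ Finset.range (i + 1), (f n k).length with hL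
    refine ⟨Nat.pair i (Encodable.encode (Pre ω L)), ?_⟩
    have hg : svGood f n i (Encodable.encode (Pre ω L)) = true := by
      rw [sv_good_iff, sv_dec_encode, sv_pre_length]
      refine ⟨⟨rfl, hL⟩, sv_prefix_of hi (sv_prefixOf_pre _ _) ?_, fun k hk hp => ?_⟩
      · rw [sv_pre_length]
        exact Finset.single_le_sum (f := fun k => (f n k).length) (fun _ _ => Nat.zero_le _)
          (Finset.mem_range.2 (by omega))
      · exact Nat.find_min hex hk (sv_prefixOf_mono (sv_prefixOf_pre _ _) hp)
    simp only [svSol, Nat.unpair_pair, hg, cond_true, sv_dec_encode]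
    exact sv_prefixOf_pre _ _
  choose q hq using key
  refine Set.infinite_of_injective_forall_mem (f := fun n => Nat.pair n (q n)) ?_ hq hfin
  intro a b hab
  exact (Nat.pair_eq_pair.1 hab).1

/-- `ω` is Martin-Löf random with respect to the uniform Bernoulli measure
iff it passes every Solovay test. -/
theorem ml_random_iff_passes_all_solovay_tests
    (μ : Measure (ℕ → Bool)) (hμ : UniformMeasure μ) [IsProbabilityMeasure μ]
    (ω : ℕ → Bool) :
    MLRandom μ ω ↔ ∀ x : ℕ → List Bool, SolovayTest x → PassesSolovay x ω :=
  ⟨sv_forward μ hμ ω, sv_backward μ hμ ω⟩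
end

section
/- An infinite binary sequence ω is Schnorr random with respect to the uniform Bernoulli measure if and only if it passes every total Solovay test of randomness (a Solovay test whose associated series converges with a computable rate of convergence). -/
open MeasureTheory Filter

/-- search -/
theorem exists_computable_of_search {α : Type*} [Primcodable α] (R : α → ℕ → Bool)
    (hR : Computable₂ R) (hex : ∀ a, ∃ t, R a t = true) :
    ∃ T : α → ℕ, Computable T ∧ ∀ a, R a (T a) = true := by
  refine ⟨fun a => Nat.find (hex a), ?_, fun a => Nat.find_spec (hex a)⟩
  refine Partrec.of_eq_tot (Partrec.rfind (p := fun a t => Part.some (R a t)) hR) ?_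
  intro a
  refine Nat.mem_rfind.2 ⟨by simpa using! (Nat.find_spec (hex a)), fun {m} hm => ?_⟩
  have := Nat.find_min (hex a) hm
  simpa using this

/-- code -/
def ratCode (q : ℚ) : ℕ := Nat.pair (Encodable.encode q.num) q.den

theorem ratCode_inj : Function.Injective ratCode := by
  intro p q h
  unfold ratCode at h
  rw [Nat.pair_eq_pair] at h
  exact Rat.ext (Encodable.encode_injective h.1) h.2

theorem ratCode_eq (q : ℚ) : @Encodable.encode ℚ Rat.instEncodable q = ratCode q := by
  rfl

def RatS (t : ℕ) : Prop :=
  0 < t.unpair.2 ∧ ∀ d < t.unpair.2 + 1, (t.unpair.1 + 1) / 2 % d = 0 → t.unpair.2 % d = 0 → d = 1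

theorem enc_int_natAbs (z : ℤ) : (Encodable.encode z + 1) / 2 = z.natAbs := by
  cases z with
  | ofNat n => 
    show (2 * n + 1) / 2 = _
    simp; omega
  | negSucc n => 
    show (2 * n + 1 + 1) / 2 = _
    simp; omega

theorem enc_int_toNat (z : ℤ) : (if Encodable.encode z % 2 = 0 then Encodable.encode z / 2 else 0) = z.toNat := by
  cases z with
  | ofNat n => 
    show (if (2 * n) % 2 = 0 then (2*n) / 2 else 0) = _
    simp
  | negSucc n => 
    show (if (2 * n + 1) % 2 = 0 then (2*n+1) / 2 else 0) = _
    simp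

theorem ratS_iff (t : ℕ) : RatS t ↔ ∃ q, ratCode q = t := by
  constructor
  · rintro ⟨h0, h⟩
    have hc : (Denumerable.ofNat ℤ t.unpair.1).natAbs.Coprime t.unpair.2 := by
      rw [← enc_int_natAbs, Denumerable.encode_ofNat]
      refine h _ ?_ (Nat.mod_eq_zero_of_dvd (Nat.gcd_dvd_left _ _)) (Nat.mod_eq_zero_of_dvd (Nat.gcd_dvd_right _ _))
      exact Nat.lt_succ_of_le (Nat.gcd_le_right _ h0)
    refine ⟨⟨Denumerable.ofNat ℤ t.unpair.1, t.unpair.2, h0.ne', hc⟩, ?_⟩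
    simp only [ratCode, Denumerable.encode_ofNat, Nat.pair_unpair]
  · rintro ⟨q, rfl⟩
    simp only [RatS, ratCode, Nat.unpair_pair]
    refine ⟨q.den_pos, fun d hd h1 h2 => ?_⟩
    rw [enc_int_natAbs] at h1
    exact Nat.eq_one_of_dvd_coprimes q.reduced (Nat.dvd_of_mod_eq_zero h1) (Nat.dvd_of_mod_eq_zero h2)

theorem ratS_prim : PrimrecPred RatS := by
  have u2 : Primrec (fun t : ℕ => t.unpair.2) := Primrec.snd.comp Primrec.unpair
  have u1 : Primrec (fun t : ℕ => t.unpair.1) := Primrec.fst.comp Primrec.unpair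
  have c1 : Primrec (fun _ : ℕ => 1) := Primrec.const 1
  refine PrimrecPred.and (Primrec.nat_lt.comp (Primrec.const 0) u2) ?_
  have key : PrimrecRel (fun (d : ℕ) (t : ℕ) => (t.unpair.1 + 1) / 2 % d = 0 → t.unpair.2 % d = 0 → d = 1) := by
    have h : PrimrecPred (fun p : ℕ × ℕ => ¬ ((p.2.unpair.1 + 1) / 2 % p.1 = 0) ∨ ¬ (p.2.unpair.2 % p.1 = 0) ∨ p.1 = 1) := by
      refine PrimrecPred.or (PrimrecPred.not ?_) (PrimrecPred.or (PrimrecPred.not ?_) ?_)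
      · refine Primrec.eq.comp (Primrec.nat_mod.comp (Primrec.nat_div.comp (Primrec.succ.comp (u1.comp Primrec.snd)) (Primrec.const 2)) Primrec.fst) (Primrec.const 0)
      · exact Primrec.eq.comp (Primrec.nat_mod.comp (u2.comp Primrec.snd) Primrec.fst) (Primrec.const 0)
      · exact Primrec.eq.comp Primrec.fst (Primrec.const 1)
    exact h.of_eq (fun p => by tauto)
  exact (PrimrecRel.forall_lt key).comp (Primrec.succ.comp u2) Primrec.id

open Classical in
theorem rat_encode_eq (q : ℚ) : @Encodable.encode ℚ Primcodable.toEncodable q = ((List.range (ratCode q)).filter (fun t => RatS t)).length := by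
  have : @Encodable.encode ℚ Primcodable.toEncodable q = (List.range (ratCode q)).countP (fun t => @decide (t ∈ Set.range (@Encodable.encode ℚ Rat.instEncodable)) (@Encodable.decidableRangeEncode ℚ _ t)) := by
    rfl
  rw [this, List.countP_eq_length_filter]
  congr 1
  apply List.filter_congr
  intro x _
  simp only [decide_eq_decide]
  rw [ratS_iff]
  rfl

theorem ratCode_computable : Computable ratCode := by
  classical
  let cnt : ℕ → ℕ := fun s => ((List.range s).filter (fun t => RatS t)).length
  have hcnt : Primrec cnt := Primrec.list_length.comp ((Primrec.listFilter ratS_prim).comp Primrec.list_range)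
  have hR : Primrec₂ (fun (n t : ℕ) => decide (RatS t ∧ cnt t = n)) := by
    refine PrimrecPred.decide (p := fun p : ℕ × ℕ => RatS p.2 ∧ cnt p.2 = p.1) (PrimrecPred.and (ratS_prim.comp Primrec.snd) (Primrec.eq.comp (hcnt.comp Primrec.snd) Primrec.fst))
  obtain ⟨T, hT, hT2⟩ := exists_computable_of_search _ hR.to_comp (fun n => 
    ⟨ratCode (Denumerable.ofNat ℚ n), by
      simp only [decide_eq_true_eq]
      refine ⟨(ratS_iff _).2 ⟨_, rfl⟩, ?_⟩
      exact (rat_encode_eq _).symm.trans (Denumerable.encode_ofNat (α := ℚ) n)⟩)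
  refine (hT.comp Computable.encode).of_eq (fun q => ?_)
  have := hT2 (@Encodable.encode ℚ Primcodable.toEncodable q)
  simp only [decide_eq_true_eq] at this
  obtain ⟨h1, h2⟩ := this
  obtain ⟨q', hq'⟩ := (ratS_iff _).1 h1
  rw [← hq'] at h2 ⊢
  have : @Encodable.encode ℚ Primcodable.toEncodable q' = @Encodable.encode ℚ Primcodable.toEncodable q := by rw [← h2, rat_encode_eq q']
  rw [@Encodable.encode_injective ℚ Primcodable.toEncodable _ _ this]

theorem rat_den_computable : Computable (fun q : ℚ => q.den) := 
  ((Computable.snd.comp Computable.unpair).comp ratCode_computable).of_eq (fun q => by simp [ratCode])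

theorem rat_toNat_computable : Computable (fun q : ℚ => q.num.toNat) := by
  have h : Primrec (fun e : ℕ => if e % 2 = 0 then e / 2 else 0) := 
    Primrec.ite (Primrec.eq.comp (Primrec.nat_mod.comp Primrec.id (Primrec.const 2)) (Primrec.const 0))
      (Primrec.nat_div.comp Primrec.id (Primrec.const 2)) (Primrec.const 0)
  refine ((h.to_comp.comp (Computable.fst.comp Computable.unpair)).comp ratCode_computable).of_eq (fun q => ?_)
  simp only [ratCode, Nat.unpair_pair]
  rw [enc_int_toNat]

theorem rat_natAbs_computable : Computable (fun q : ℚ => q.num.natAbs) := by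
  have h : Primrec (fun e : ℕ => (e + 1) / 2) := 
      (Primrec.nat_div.comp Primrec.succ (Primrec.const 2))
  refine ((h.to_comp.comp (Computable.fst.comp Computable.unpair)).comp ratCode_computable).of_eq (fun q => ?_)
  simp only [ratCode, Nat.unpair_pair]
  rw [enc_int_natAbs]

theorem nat_pow_primrec : Primrec₂ (fun a b : ℕ => a ^ b) := by
  exact Primrec₂.unpaired'.1 Nat.Primrec.pow

theorem mk_aux (N A D : ℕ → ℕ) (hN : Computable N) (hA : Computable A) (hD : Computable D) :
    Computable₂ (fun (p : ℕ × ℕ) (k : ℕ) => decide (N k = A k ∧ A k * 2 ^ p.2 = p.1 * D k)) := by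
  have hP : PrimrecPred (fun v : (ℕ × ℕ) × (ℕ × ℕ × ℕ) => v.2.1 = v.2.2.1 ∧ v.2.2.1 * 2 ^ v.1.2 = v.1.1 * v.2.2.2) := by
    refine PrimrecPred.and (Primrec.eq.comp (Primrec.fst.comp Primrec.snd) (Primrec.fst.comp (Primrec.snd.comp Primrec.snd))) ?_
    refine Primrec.eq.comp (Primrec.nat_mul.comp (Primrec.fst.comp (Primrec.snd.comp Primrec.snd)) (nat_pow_primrec.comp (Primrec.const 2) (Primrec.snd.comp Primrec.fst))) (Primrec.nat_mul.comp (Primrec.fst.comp Primrec.fst) (Primrec.snd.comp (Primrec.snd.comp Primrec.snd)))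
  exact hP.decide.to_comp.comp (Computable.pair Computable.fst
      (Computable.pair (hN.comp Computable.snd) (Computable.pair (hA.comp Computable.snd) (hD.comp Computable.snd))))

theorem rat_mk_computable : Computable₂ (fun a b : ℕ => (a : ℚ) / 2 ^ b) := by
  let R : ℕ × ℕ → ℕ → Bool := fun p k => 
    decide ((Denumerable.ofNat ℚ k).num.toNat = (Denumerable.ofNat ℚ k).num.natAbs ∧
      (Denumerable.ofNat ℚ k).num.natAbs * 2 ^ p.2 = p.1 * (Denumerable.ofNat ℚ k).den)
  have hR : Computable₂ R :=
    mk_aux _ _ _ (rat_toNat_computable.comp (Computable.ofNat ℚ)) (rat_natAbs_computable.comp (Computable.ofNat ℚ))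
      (rat_den_computable.comp (Computable.ofNat ℚ))
  have key : ∀ (a b : ℕ) (q : ℚ), (q.num.toNat = q.num.natAbs ∧ q.num.natAbs * 2 ^ b = a * q.den) ↔ q = (a : ℚ) / 2 ^ b := by
    intro a b q
    have hq := Rat.num_div_den q
    have hd : (q.den : ℚ) ≠ 0 := by exact_mod_cast q.den_pos.ne'
    constructor
    · rintro ⟨h1, h2⟩
      have h3 : q.num = (q.num.natAbs : ℤ) := by omega
      have h4 : (q.num : ℚ) = (q.num.natAbs : ℚ) := (congrArg (Int.cast : ℤ → ℚ) h3).trans (Int.cast_natCast _)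
      have h5 : (q.num.natAbs : ℚ) * 2 ^ b = a * q.den := by exact_mod_cast h2
      rw [← h4] at h5
      rw [← hq]
      field_simp
      linarith
    · intro h
      have h0 : 0 ≤ q.num := by
        rw [Rat.num_nonneg, h]; positivity
      refine ⟨by omega, ?_⟩
      have h4 : (q.num : ℚ) = (q.num.natAbs : ℚ) := by
        have h3 : q.num = (q.num.natAbs : ℤ) := by omega
        exact (congrArg (Int.cast : ℤ → ℚ) h3).trans (Int.cast_natCast _)
      have : (q.num.natAbs : ℚ) * 2 ^ b = a * q.den := by
        rw [← h4]
        rw [← hq] at h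
        field_simp at h
        linarith
      exact_mod_cast this
  obtain ⟨T, hT, hT2⟩ := exists_computable_of_search R hR (fun p => ⟨@Encodable.encode ℚ Primcodable.toEncodable ((p.1 : ℚ) / 2 ^ p.2), by
    simp only [R, decide_eq_true_eq]
    exact (key _ _ _).2 (Denumerable.ofNat_encode _)⟩)
  refine ((Computable.ofNat ℚ).comp hT).of_eq (fun p => ?_)
  have := hT2 p
  simp only [R, decide_eq_true_eq] at this
  rwa [key] at this

/-- all strings -/
def allStr (L : ℕ) : List (List Bool) :=
  Nat.rec [[]] (fun _ A => A.map (List.cons true) ++ A.map (List.cons false)) L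

theorem mem_allStr (L : ℕ) : ∀ s : List Bool, s ∈ allStr L ↔ s.length = L := by
  induction L with
  | zero => intro s; simp [allStr]
  | succ L ih =>
    intro s
    have : allStr (L+1) = (allStr L).map (List.cons true) ++ (allStr L).map (List.cons false) := rfl
    rw [this]
    cases s with
    | nil => simp
    | cons b s => 
      simp [ih]
      cases b <;> simp

theorem nodup_allStr (L : ℕ) : (allStr L).Nodup := by
  induction L with
  | zero => simp [allStr]
  | succ L ih =>
    have : allStr (L+1) = (allStr L).map (List.cons true) ++ (allStr L).map (List.cons false) := rfl
    rw [this, List.nodup_append]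
    refine ⟨ih.map (List.cons_injective), ih.map (List.cons_injective), ?_⟩
    intro a ha b hb
    simp only [List.mem_map] at ha hb
    obtain ⟨a', _, rfl⟩ := ha
    obtain ⟨b', _, rfl⟩ := hb
    simp

theorem allStr_primrec : Primrec allStr := by
  have h1 : ∀ b : Bool, Primrec₂ (fun (_ : ℕ) (p : ℕ × List (List Bool)) => p.2.map (List.cons b)) := fun b =>
    Primrec.list_map (Primrec.snd.comp Primrec.snd) (Primrec.list_cons.comp (Primrec.const b) Primrec.snd)
  exact (Primrec.nat_rec' (f := fun n : ℕ => n) (g := fun _ : ℕ => ([[]] : List (List Bool))) 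
    (h := fun _ p => p.2.map (List.cons true) ++ p.2.map (List.cons false)) Primrec.id (Primrec.const _) (Primrec.list_append.comp (h1 true) (h1 false)))

def HasPre (s : List Bool) (l : List (List Bool)) : Prop := ∃ y ∈ l, s.take y.length = y

theorem hasPre_primrec : PrimrecRel HasPre := by
  have h : PrimrecRel (fun (y s : List Bool) => s.take y.length = y) :=
    Primrec.eq.comp (Primrec.list_take.comp (Primrec.list_length.comp Primrec.fst) Primrec.snd) Primrec.fst
  exact (PrimrecRel.exists_mem_list h).comp Primrec.snd Primrec.fst

def lev (l1 l2 : List (List Bool)) : ℕ := (l1 ++ l2).flatten.length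

theorem lev_primrec : Primrec₂ lev :=
  Primrec.list_length.comp (Primrec.list_flatten.comp (Primrec.list_append.comp Primrec.fst Primrec.snd))

theorem le_lev {l1 l2 : List (List Bool)} {y} (h : y ∈ l1 ∨ y ∈ l2) : y.length ≤ lev l1 l2 := 
  (List.sublist_flatten_of_mem (List.mem_append.2 h)).length_le

open Classical in
noncomputable def block (l1 l2 : List (List Bool)) : List (List Bool) :=
  (allStr (lev l1 l2)).filter (fun s => HasPre s l1 ∧ ¬ HasPre s l2)

theorem block_primrec : Primrec₂ block := by
  classical
  have h : PrimrecRel (fun (s : List Bool) (p : List (List Bool) × List (List Bool)) => HasPre s p.1 ∧ ¬ HasPre s p.2) :=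
    PrimrecPred.and (hasPre_primrec.comp Primrec.fst (Primrec.fst.comp Primrec.snd)) 
     (PrimrecPred.not (hasPre_primrec.comp Primrec.fst (Primrec.snd.comp Primrec.snd)))
  exact (PrimrecRel.listFilter h).comp (allStr_primrec.comp lev_primrec) Primrec.id

theorem length_of_mem_block {l1 l2 s} (h : s ∈ block l1 l2) : s.length = lev l1 l2 := by
  classical
  exact (mem_allStr _ _).1 (List.mem_of_mem_filter h)

/-- union -/
def Un (l : List (List Bool)) : Set (ℕ → Bool) := ⋃ y ∈ l, Cyl y

theorem mem_cyl_iff (ω : ℕ → Bool) (y : List Bool) : ω ∈ Cyl y ↔ Pre ω y.length = y := by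
  constructor
  · intro h
    apply List.ext_getElem
    · simp [Pre]
    · intro i h1 h2
      simp [Pre]
      exact h ⟨i, h2⟩
  · intro h i
    have : (Pre ω y.length)[i.1]? = y[i.1]? := by rw [h]
    simpa [Pre] using this

theorem take_pre (ω : ℕ → Bool) {k L : ℕ} (h : k ≤ L) : (Pre ω L).take k = Pre ω k := by
  simp [Pre, ← List.map_take, List.take_range, h]

theorem mem_Un_iff (ω : ℕ → Bool) (l : List (List Bool)) (L : ℕ) (h : ∀ y ∈ l, y.length ≤ L) :
    ω ∈ Un l ↔ HasPre (Pre ω L) l := by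
  simp only [Un, Set.mem_iUnion, HasPre, exists_prop]
  refine exists_congr fun y => and_congr_right fun hy => ?_
  rw [mem_cyl_iff, take_pre _ (h y hy)]

theorem mem_diff_iff (ω : ℕ → Bool) (l1 l2 : List (List Bool)) :
    ω ∈ Un l1 \ Un l2 ↔ ∃ s ∈ block l1 l2, ω ∈ Cyl s := by
  classical
  have key : ω ∈ Un l1 \ Un l2 ↔ Pre ω (lev l1 l2) ∈ block l1 l2 := by
    rw [Set.mem_sdiff, mem_Un_iff ω l1 (lev l1 l2) (fun y hy => le_lev (Or.inl hy)), mem_Un_iff ω l2 (lev l1 l2) (fun y hy => le_lev (Or.inr hy))]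
    simp [block, List.mem_filter, mem_allStr, Pre]
  rw [key]
  constructor
  · intro h
    refine ⟨_, h, ?_⟩
    rw [mem_cyl_iff]
    simp [Pre]
  · rintro ⟨s, hs, h⟩
    rw [mem_cyl_iff, length_of_mem_block hs] at h
    rwa [h]

theorem measurable_cyl (y : List Bool) : MeasurableSet (Cyl y) := by
  have : Cyl y = ⋂ i : Fin y.length, {ω : ℕ → Bool | ω i = y.get i} := by
    ext ω; simp [Cyl]
  rw [this]
  refine MeasurableSet.iInter fun i => ?_
  exact measurableSet_eq_fun (measurable_pi_apply _) measurable_const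

theorem measurable_Un (l) : MeasurableSet (Un l) := 
  MeasurableSet.biUnion (Set.to_countable _) (fun y _ => measurable_cyl y)

theorem measure_diff_block (μ : Measure (ℕ → Bool)) (hμ : UniformMeasure μ) (l1 l2 : List (List Bool)) :
    μ (Un l1 \ Un l2) = (block l1 l2).length * (2 : ENNReal)⁻¹ ^ (lev l1 l2) := by
  classical
  have h1 : Un l1 \ Un l2 = ⋃ s ∈ (block l1 l2).toFinset, Cyl s := by
    ext ω; rw [mem_diff_iff]; simp
  rw [h1, measure_biUnion_finset]
  · have hn : (block l1 l2).Nodup := (nodup_allStr _).filter _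
    rw [Finset.sum_congr rfl (g := fun _ => (2 : ENNReal)⁻¹ ^ (lev l1 l2))]
    · rw [Finset.sum_const, List.toFinset_card_of_nodup hn, nsmul_eq_mul]
    · intro s hs
      rw [hμ, length_of_mem_block (List.mem_toFinset.1 hs)]
  · intro a ha b hb hab
    refine Set.disjoint_left.2 fun ω h1 h2 => hab ?_
    simp only [List.coe_toFinset, Set.mem_ofPred_eq] at ha hb
    rw [mem_cyl_iff, length_of_mem_block ha] at h1
    rw [mem_cyl_iff, length_of_mem_block hb] at h2
    rw [← h1, h2]
  · intro s _; exact measurable_cyl s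

theorem block_weight (l1 l2 : List (List Bool)) :
    ((block l1 l2).map (fun s => (2 : ENNReal)⁻¹ ^ s.length)).sum = (block l1 l2).length * (2 : ENNReal)⁻¹ ^ (lev l1 l2) := by
  rw [List.map_congr_left (g := fun _ => (2 : ENNReal)⁻¹ ^ (lev l1 l2))]
  · simp
  · intro s hs; rw [length_of_mem_block hs]

/-- initial segment -/
def seg (h : ℕ → List Bool) (t : ℕ) : List (List Bool) := (List.range t).map h

theorem seg_computable {α : Type*} [Primcodable α] (h : α → ℕ → List Bool) (hh : Computable₂ h) (t : α → ℕ) (ht : Computable t) :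
    Computable (fun a => seg (h a) (t a)) := by
  have := Computable.nat_rec (f := t) (g := fun _ : α => ([] : List (List Bool))) (h := fun a p => p.2 ++ [h a p.1]) ht (Computable.const _)
    (Computable.list_concat.comp (Computable.snd.comp Computable.snd) (hh.comp Computable.fst (Computable.fst.comp Computable.snd)))
  refine this.of_eq (fun a => ?_)
  generalize t a = n
  induction n with
  | zero => simp [seg]
  | succ n ih => 
    simp only [] at ih ⊢
    rw [ih]
    simp [seg, List.range_succ]

theorem mem_Un_seg (h : ℕ → List Bool) (t : ℕ) (ω) : ω ∈ Un (seg h t) ↔ ∃ i < t, ω ∈ Cyl (h i) := by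
  simp [Un, seg]

/-- flatten with padding -/
def flat (B : ℕ → List (List Bool)) (q : ℕ) : List Bool :=
  ((B q.unpair.1)[q.unpair.2]?).getD ((List.range q).map (fun _ => false))

theorem flat_computable (B : ℕ → List (List Bool)) (hB : Computable B) : Computable (flat B) := by
  have u2 : Computable (fun t : ℕ => t.unpair.2) := Computable.snd.comp Computable.unpair
  have u1 : Computable (fun t : ℕ => t.unpair.1) := Computable.fst.comp Computable.unpair
  have hp : Primrec (fun q : ℕ => (List.range q).map (fun _ => false)) :=
    Primrec.list_map Primrec.list_range (Primrec.const false).to₂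
  exact Computable.option_getD (Computable.list_getElem?.comp (hB.comp u1) u2) hp.to_comp

/-- weights -/
noncomputable def rw' (B : ℕ → List (List Bool)) (j p : ℕ) : ENNReal :=
  (((B j)[p]?).map (fun s => (2 : ENNReal)⁻¹ ^ s.length)).getD 0

theorem tsum_list (l : List ENNReal) : ∑' p : ℕ, (l[p]?).getD 0 = l.sum := by
  induction l with
  | nil => simp
  | cons a l ih =>
    rw [tsum_eq_zero_add' ENNReal.summable]
    simp [ih]

theorem tsum_rw (B : ℕ → List (List Bool)) (j : ℕ) :
    ∑' p, rw' B j p = ((B j).map (fun s => (2 : ENNReal)⁻¹ ^ s.length)).sum := by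
  rw [← tsum_list]
  simp [rw']

theorem tsum_geom_tail (J : ℕ) : ∑' q : ℕ, (if J ≤ q then (2 : ENNReal)⁻¹ ^ q else 0) = 2 * (2 : ENNReal)⁻¹ ^ J := by
  induction J with
  | zero => simp [ENNReal.tsum_geometric, ENNReal.one_sub_inv_two]
  | succ J ih =>
    rw [tsum_eq_zero_add' ENNReal.summable]
    simp only [Nat.le_zero, Nat.add_eq_zero_iff, one_ne_zero, and_false, if_false, zero_add, Nat.add_le_add_iff_right, pow_succ]
    rw [← mul_assoc, ← ih, ← ENNReal.tsum_mul_right]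
    congr 1; ext q
    split_ifs <;> simp

/-- rate -/
def rate (B : ℕ → List (List Bool)) (J : ℕ) : ℕ :=
  Nat.rec 0 (fun j acc => acc + Nat.pair j (B j).length + 1) J

theorem rate_computable (B : ℕ → List (List Bool)) (hB : Computable B) : Computable (rate B) := by
  refine Computable.nat_rec (f := fun n : ℕ => n) (g := fun _ : ℕ => (0:ℕ)) (h := fun _ p => p.2 + Nat.pair p.1 (B p.1).length + 1)
    Computable.id (Computable.const _) ?_
  have h1 : Computable (fun p : ℕ × (ℕ × ℕ) => p.2.1) := Computable.fst.comp Computable.snd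
  have h2 : Computable (fun p : ℕ × (ℕ × ℕ) => p.2.2) := Computable.snd.comp Computable.snd
  exact Computable.succ.comp (Primrec.nat_add.to_comp.comp h2 (Primrec₂.natPair.to_comp.comp h1 (Computable.list_length.comp (hB.comp h1))))

theorem le_rate (B : ℕ → List (List Bool)) (J : ℕ) : J ≤ rate B J := by
  induction J with
  | zero => simp
  | succ J ih =>
    have : rate B (J+1) = rate B J + Nat.pair J (B J).length + 1 := rfl
    omega

theorem lt_rate (B : ℕ → List (List Bool)) (J j p : ℕ) (hj : j < J) (hp : p < (B j).length) : Nat.pair j p < rate B J := by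
  induction J with
  | zero => omega
  | succ J ih =>
    have : rate B (J+1) = rate B J + Nat.pair J (B J).length + 1 := rfl
    rcases Nat.lt_succ_iff_lt_or_eq.1 hj with h | h
    · have := ih h; omega
    · subst h
      have := Nat.pair_lt_pair_right j hp
      omega

theorem flat_tail (B : ℕ → List (List Bool))
    (hw : ∀ j, ((B j).map (fun s => (2 : ENNReal)⁻¹ ^ s.length)).sum ≤ (2 : ENNReal)⁻¹ ^ j) (J : ℕ) :
    ∑' q : {q : ℕ // rate B J ≤ q}, (2 : ENNReal)⁻¹ ^ (flat B q.1).length ≤ 4 * (2 : ENNReal)⁻¹ ^ J := by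
  have hpt : ∀ q : {q : ℕ // rate B J ≤ q}, (2 : ENNReal)⁻¹ ^ (flat B q.1).length ≤ 
      (if J ≤ q.1 then (2 : ENNReal)⁻¹ ^ q.1 else 0) + (if J ≤ q.1.unpair.1 then rw' B q.1.unpair.1 q.1.unpair.2 else 0) := by
    rintro ⟨q, hq⟩
    have hJ : J ≤ q := (le_rate B J).trans hq
    simp only [hJ, if_true]
    by_cases hp : q.unpair.2 < (B q.unpair.1).length
    · have hj : J ≤ q.unpair.1 := by
        by_contra hc
        have := lt_rate B J _ _ (not_le.1 hc) hp
        rw [Nat.pair_unpair] at this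
        omega
      simp [hj, flat, rw', hp]
    · have : (B q.unpair.1)[q.unpair.2]? = none := by simpa using hp
      simp [flat, this]
  refine (ENNReal.tsum_le_tsum hpt).trans ?_
  refine (ENNReal.tsum_comp_le_tsum_of_injective (f := fun q : {q : ℕ // rate B J ≤ q} => q.1) Subtype.val_injective
    (fun q => (if J ≤ q then (2 : ENNReal)⁻¹ ^ q else 0) + (if J ≤ q.unpair.1 then rw' B q.unpair.1 q.unpair.2 else 0))).trans ?_
  rw [ENNReal.tsum_add, tsum_geom_tail]
  have h2 : ∑' q : ℕ, (if J ≤ q.unpair.1 then rw' B q.unpair.1 q.unpair.2 else 0) ≤ 2 * (2 : ENNReal)⁻¹ ^ J := by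
    rw [← tsum_geom_tail, ← Nat.pairEquiv.tsum_eq, ENNReal.tsum_prod']
    refine ENNReal.tsum_le_tsum fun j => ?_
    simp only [Nat.pairEquiv_apply, Function.uncurry_apply_pair, Nat.unpair_pair]
    split_ifs
    · rw [tsum_rw]; exact hw j
    · simp
  calc _ ≤ 2 * (2 : ENNReal)⁻¹ ^ J + 2 * (2 : ENNReal)⁻¹ ^ J := by gcongr
    _ = _ := by ring

theorem two_zpow_eq (n : ℕ) : (2 : ℝ) ^ (-(n : ℤ)) = ((2 : ENNReal)⁻¹ ^ n).toReal := by
  simp [zpow_neg]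

theorem flat_total (B : ℕ → List (List Bool)) (hB : Computable B)
    (hw : ∀ j, ((B j).map (fun s => (2 : ENNReal)⁻¹ ^ s.length)).sum ≤ (2 : ENNReal)⁻¹ ^ j) :
    TotalSolovayTest (flat B) := by
  have hfin : ∀ J : ℕ, 4 * (2 : ENNReal)⁻¹ ^ J ≠ ⊤ := fun J => ENNReal.mul_ne_top (by simp) (by simp)
  refine ⟨⟨flat_computable B hB, ?_⟩, fun δ => rate B (δ.den + 2), ?_, ?_⟩
  · simp only [two_zpow_eq]
    apply ENNReal.summable_toReal
    have h0 := flat_tail B hw 0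
    have : ∑' q : ℕ, (2 : ENNReal)⁻¹ ^ (flat B q).length = ∑' q : {q : ℕ // rate B 0 ≤ q}, (2 : ENNReal)⁻¹ ^ (flat B q.1).length := by
      refine (tsum_subtype_eq_of_support_subset (s := {q : ℕ | rate B 0 ≤ q}) (f := fun q => (2 : ENNReal)⁻¹ ^ (flat B q).length) ?_).symm
      intro q _
      exact Nat.zero_le _
    rw [this]
    exact ne_top_of_le_ne_top (hfin 0) h0
  · exact (rate_computable B hB).comp ((Computable.succ.comp Computable.succ).comp rat_den_computable)
  · intro δ hδ
    simp only [two_zpow_eq]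
    rw [← ENNReal.tsum_toReal_eq (fun q => by simp)]
    have h1 := ENNReal.toReal_mono (hfin _) (flat_tail B hw (δ.den + 2))
    refine h1.trans ?_
    simp only [ENNReal.toReal_mul, ENNReal.toReal_pow, ENNReal.toReal_inv, ENNReal.toReal_ofNat]
    have hd : (δ.den : ℝ) ≤ 2 ^ δ.den := by exact_mod_cast (Nat.lt_two_pow_self).le
    have hd0 : (0 : ℝ) < δ.den := by exact_mod_cast δ.den_pos
    have hn : (1 : ℝ) ≤ δ.num := by exact_mod_cast Rat.num_pos.2 hδ
    have hδe : (δ : ℝ) = δ.num / δ.den := Rat.cast_def δ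
    rw [hδe, pow_add, inv_pow]
    calc (4 : ℝ) * ((2 ^ δ.den)⁻¹ * 2⁻¹ ^ 2) = (2 ^ δ.den)⁻¹ := by ring
      _ ≤ (δ.den : ℝ)⁻¹ := by gcongr
      _ = 1 / δ.den := by simp
      _ ≤ _ := by gcongr

theorem tail_measure (μ : Measure (ℕ → Bool)) (hμ : UniformMeasure μ) (x : ℕ → List Bool) (hx : SolovayTest x) (M : ℕ) (δ : ℚ)
    (h : ∑' n : {n : ℕ // M ≤ n}, (2 : ℝ) ^ (-((x n.1).length : ℤ)) ≤ (δ : ℝ)) :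
    μ (⋃ n : {n : ℕ // M ≤ n}, Cyl (x n.1)) ≤ ENNReal.ofReal δ := by
  refine (measure_iUnion_le _).trans ?_
  refine le_trans ?_ (ENNReal.ofReal_le_ofReal h)
  have hsm : Summable (fun n : {n : ℕ // M ≤ n} => (2 : ℝ) ^ (-((x n.1).length : ℤ))) := hx.2.subtype {n | M ≤ n}
  rw [ENNReal.ofReal_tsum_of_nonneg (fun n => by positivity) hsm]
  refine ENNReal.tsum_le_tsum fun n => ?_
  rw [hμ, two_zpow_eq, ENNReal.ofReal_toReal (by simp)]

theorem measure_Un_toReal (μ : Measure (ℕ → Bool)) (hμ : UniformMeasure μ) (l : List (List Bool)) :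
    (μ (Un l)).toReal = (block l []).length / 2 ^ (lev l []) := by
  have h := measure_diff_block μ hμ l []
  have h0 : Un l \ Un [] = Un l := by simp [Un]
  rw [h0] at h
  rw [h]
  simp [div_eq_mul_inv]

theorem dir1 (μ : Measure (ℕ → Bool)) (hμ : UniformMeasure μ) [IsProbabilityMeasure μ]
    (ω : ℕ → Bool) (hω : SchnorrRandom μ ω) (x : ℕ → List Bool) (hx : TotalSolovayTest x) : PassesSolovay x ω := by
  obtain ⟨hs, m, hm, hmδ⟩ := hx
  by_contra hinf
  have hinf : {n | PrefixOf (x n) ω}.Infinite := hinf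
  have hpow : Computable (fun n : ℕ => ((1 : ℕ) : ℚ) / 2 ^ n) := rat_mk_computable.comp (Computable.const 1) Computable.id
  let f : ℕ → ℕ → List Bool := fun n i => x (m (((1 : ℕ) : ℚ) / 2 ^ n) + i)
  have hf : Computable₂ f := hs.1.comp (Primrec.nat_add.to_comp.comp ((hm.comp hpow).comp Computable.fst) Computable.snd)
  have hseg : Computable (fun p : ℕ × ℚ => seg (f p.1) (m p.2)) :=
    seg_computable (fun p : ℕ × ℚ => f p.1) (hf.comp (Computable.fst.comp Computable.fst) Computable.snd) (fun p => m p.2) (hm.comp Computable.snd)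
  let g : ℕ → ℚ → ℚ := fun n ε => ((block (seg (f n) (m ε)) []).length : ℚ) / 2 ^ (lev (seg (f n) (m ε)) [])
  have hg : Computable₂ g := by
    have h1 : Primrec (fun l : List (List Bool) => (block l []).length) :=
      Primrec.list_length.comp (block_primrec.comp Primrec.id (Primrec.const []))
    have h2 : Primrec (fun l : List (List Bool) => lev l []) := lev_primrec.comp Primrec.id (Primrec.const [])
    exact rat_mk_computable.comp (h1.to_comp.comp hseg) (h2.to_comp.comp hseg)
  have htest : SchnorrTest μ f := by
    refine ⟨⟨hf, fun n => ?_⟩, g, hg, fun n ε hε => ?_⟩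
    · have h := tail_measure μ hμ x hs _ _ (hmδ (((1 : ℕ) : ℚ) / 2 ^ n) (by positivity))
      refine (measure_mono ?_).trans (h.trans (le_of_eq ?_))
      · intro α hα
        simp only [EffOpen, Set.mem_iUnion] at hα ⊢
        obtain ⟨i, hi⟩ := hα
        exact ⟨⟨_, Nat.le_add_right _ i⟩, hi⟩
      · have : (((((1 : ℕ) : ℚ) / 2 ^ n : ℚ)) : ℝ) = ((2 : ENNReal)⁻¹ ^ n).toReal := by
          simp
        rw [this, ENNReal.ofReal_toReal (by simp)]
    · have h := tail_measure μ hμ x hs _ _ (hmδ ε hε)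
      have hge : ((g n ε : ℚ) : ℝ) = (μ (Un (seg (f n) (m ε)))).toReal := by
        rw [measure_Un_toReal μ hμ]; simp [g]
      rw [hge]
      have hle : (μ (Un (seg (f n) (m ε)))).toReal ≤ (μ (EffOpen f n)).toReal := by
        refine ENNReal.toReal_mono (measure_ne_top _ _) (measure_mono ?_)
        intro α hα
        rw [mem_Un_seg] at hα
        obtain ⟨i, _, hi⟩ := hα
        exact Set.mem_iUnion.2 ⟨i, hi⟩
      have hub : μ (EffOpen f n) ≤ μ (Un (seg (f n) (m ε))) + ENNReal.ofReal ε := by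
        refine le_trans ?_ (add_le_add_right h _)
        refine (measure_mono ?_).trans (measure_union_le _ _)
        intro α hα
        obtain ⟨i, hi⟩ := Set.mem_iUnion.1 hα
        by_cases hc : i < m ε
        · exact Or.inl ((mem_Un_seg _ _ _).2 ⟨i, hc, hi⟩)
        · exact Or.inr (Set.mem_iUnion.2 ⟨⟨m (((1 : ℕ) : ℚ) / 2 ^ n) + i, by omega⟩, hi⟩)
      have hub2 := ENNReal.toReal_mono (by finiteness) hub
      have hε' : (0 : ℝ) ≤ ε := by exact_mod_cast hε.le
      rw [ENNReal.toReal_add (measure_ne_top _ _) (by simp), ENNReal.toReal_ofReal hε'] at hub2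
      rw [abs_le]; constructor <;> linarith
  obtain ⟨n, hn⟩ := hω f htest
  apply hn
  obtain ⟨i, hi, hlt⟩ := hinf.exists_gt (m (((1 : ℕ) : ℚ) / 2 ^ n))
  refine Set.mem_iUnion.2 ⟨i - m (((1 : ℕ) : ℚ) / 2 ^ n), ?_⟩
  show ω ∈ Cyl (x (m (((1 : ℕ) : ℚ) / 2 ^ n) + (i - m (((1 : ℕ) : ℚ) / 2 ^ n))))
  rw [Nat.add_sub_cancel' hlt.le]
  exact hi

/-- stage condition -/
def StageCond (v t a b : ℕ) (l : List (List Bool)) : Prop :=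
  (v.unpair.2 = 0 ∧ t = 0) ∨ (v.unpair.2 ≠ 0 ∧ v.unpair.2 ≤ t ∧
    a * (2 ^ (lev l []) * 2 ^ (v + 2)) ≤ ((block l []).length * 2 ^ (v + 2) + 2 * 2 ^ (lev l [])) * b)

theorem stageCond_primrec : PrimrecPred (fun w : ℕ × ℕ × ℕ × ℕ × List (List Bool) => StageCond w.1 w.2.1 w.2.2.1 w.2.2.2.1 w.2.2.2.2) := by
  have hv : Primrec (fun w : ℕ × ℕ × ℕ × ℕ × List (List Bool) => w.1) := Primrec.fst
  have h1 : Primrec (fun w : ℕ × ℕ × ℕ × ℕ × List (List Bool) => w.2) := Primrec.snd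
  have ht : Primrec (fun w : ℕ × ℕ × ℕ × ℕ × List (List Bool) => w.2.1) := Primrec.fst.comp h1
  have h2 : Primrec (fun w : ℕ × ℕ × ℕ × ℕ × List (List Bool) => w.2.2) := Primrec.snd.comp h1
  have ha : Primrec (fun w : ℕ × ℕ × ℕ × ℕ × List (List Bool) => w.2.2.1) := Primrec.fst.comp h2
  have h3 : Primrec (fun w : ℕ × ℕ × ℕ × ℕ × List (List Bool) => w.2.2.2) := Primrec.snd.comp h2
  have hb : Primrec (fun w : ℕ × ℕ × ℕ × ℕ × List (List Bool) => w.2.2.2.1) := Primrec.fst.comp h3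
  have hl : Primrec (fun w : ℕ × ℕ × ℕ × ℕ × List (List Bool) => w.2.2.2.2) := Primrec.snd.comp h3
  have hk : Primrec (fun w : ℕ × ℕ × ℕ × ℕ × List (List Bool) => w.1.unpair.2) := Primrec.snd.comp (Primrec.unpair.comp hv)
  have hp : Primrec (fun w : ℕ × ℕ × ℕ × ℕ × List (List Bool) => 2 ^ (w.1 + 2)) :=
    nat_pow_primrec.comp (Primrec.const 2) (Primrec.succ.comp (Primrec.succ.comp hv))
  have hL : Primrec (fun w : ℕ × ℕ × ℕ × ℕ × List (List Bool) => 2 ^ (lev w.2.2.2.2 [])) :=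
    nat_pow_primrec.comp (Primrec.const 2) (lev_primrec.comp hl (Primrec.const []))
  have hc : Primrec (fun w : ℕ × ℕ × ℕ × ℕ × List (List Bool) => (block w.2.2.2.2 []).length) :=
    Primrec.list_length.comp (block_primrec.comp hl (Primrec.const []))
  have hk0 := Primrec.eq.comp hk (Primrec.const 0)
  refine PrimrecPred.or (PrimrecPred.and hk0 (Primrec.eq.comp ht (Primrec.const 0)))
    (PrimrecPred.and (PrimrecPred.not hk0) (PrimrecPred.and (Primrec.nat_le.comp hk ht) ?_))
  exact Primrec.nat_le.comp (Primrec.nat_mul.comp ha (Primrec.nat_mul.comp hL hp))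
    (Primrec.nat_mul.comp (Primrec.nat_add.comp (Primrec.nat_mul.comp hc hp) (Primrec.nat_mul.comp (Primrec.const 2) hL)) hb)

theorem stage_search (f : ℕ → ℕ → List Bool) (hf : Computable₂ f) (N A D : ℕ → ℕ) (hN : Computable N) (hA : Computable A) (hD : Computable D)
    (hex : ∀ v, ∃ t, StageCond v t (A v) (D v) (seg (f (N v)) t)) :
    ∃ T : ℕ → ℕ, Computable T ∧ ∀ v, StageCond v (T v) (A v) (D v) (seg (f (N v)) (T v)) := by
  classical
  have hP := stageCond_primrec.decide.to_comp
  have hseg : Computable (fun p : ℕ × ℕ => seg (f (N p.1)) p.2) :=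
    seg_computable (fun p : ℕ × ℕ => f (N p.1)) (hf.comp ((hN.comp Computable.fst).comp Computable.fst) Computable.snd) _ Computable.snd
  have hR := hP.comp (Computable.pair (Computable.fst (α := ℕ) (β := ℕ)) (Computable.pair Computable.snd
        (Computable.pair (hA.comp Computable.fst) (Computable.pair (hD.comp Computable.fst) hseg))))
  obtain ⟨T, hT, hT2⟩ := exists_computable_of_search (fun v t => decide (StageCond v t (A v) (D v) (seg (f (N v)) t))) hR
    (fun v => (hex v).imp fun t ht => decide_eq_true ht)
  exact ⟨T, hT, fun v => of_decide_eq_true (hT2 v)⟩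

theorem cond_iff (a b c L K : ℕ) (hb : 0 < b) :
    a * (2 ^ L * 2 ^ K) ≤ (c * 2 ^ K + 2 * 2 ^ L) * b ↔ (a : ℝ) / b ≤ c / 2 ^ L + 2 / 2 ^ K := by
  have hb' : (0 : ℝ) < b := by exact_mod_cast hb
  rw [div_add_div _ _ (by positivity) (by positivity), div_le_div_iff₀ hb' (by positivity)]
  rw [← Nat.cast_le (α := ℝ)]
  push_cast
  rw [mul_comm (2 ^ L : ℝ) 2]

theorem toNat_div_den (q : ℚ) : ((q.num.toNat : ℕ) : ℝ) / q.den = max (q : ℝ) 0 := by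
  have hd0 : (0 : ℝ) < q.den := by exact_mod_cast q.den_pos
  have h : ((q.num.toNat : ℕ) : ℝ) = max (q.num : ℝ) 0 := by
    have : ((q.num.toNat : ℕ) : ℤ) = max q.num 0 := by simp
    have h2 : (((q.num.toNat : ℕ) : ℤ) : ℝ) = ((max q.num 0 : ℤ) : ℝ) := by rw [this]
    rw [Int.cast_max, Int.cast_natCast, Int.cast_zero] at h2
    exact h2
  rw [h, Rat.cast_def, ← max_div_div_right hd0.le]
  simp

theorem tendsto_seg (μ : Measure (ℕ → Bool)) [IsProbabilityMeasure μ] (f : ℕ → ℕ → List Bool) (n : ℕ) :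
    Tendsto (fun t => (μ (Un (seg (f n) t))).toReal) atTop (nhds (μ (EffOpen f n)).toReal) := by
  refine (ENNReal.tendsto_toReal (measure_ne_top _ _)).comp ?_
  have hU : EffOpen f n = ⋃ t, Un (seg (f n) t) := by
    ext α
    simp only [EffOpen, Set.mem_iUnion, mem_Un_seg]
    exact ⟨fun ⟨i, hi⟩ => ⟨i + 1, i, by omega, hi⟩, fun ⟨_, i, _, hi⟩ => ⟨i, hi⟩⟩
  rw [hU]
  refine tendsto_measure_iUnion_atTop ?_
  intro s t hst α hα
  rw [mem_Un_seg] at hα ⊢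
  obtain ⟨i, hi, h⟩ := hα
  exact ⟨i, by omega, h⟩

theorem dir2 (μ : Measure (ℕ → Bool)) (hμ : UniformMeasure μ) [IsProbabilityMeasure μ]
    (ω : ℕ → Bool) (hω : ∀ x : ℕ → List Bool, TotalSolovayTest x → PassesSolovay x ω) : SchnorrRandom μ ω := by
  rintro f ⟨⟨hf, hfm⟩, g, hg, hgε⟩
  by_contra hall
  push Not at hall
  let N : ℕ → ℕ := fun v => Nat.pair v.unpair.1 0
  have hN : Computable N := (Primrec₂.natPair.comp (Primrec.fst.comp Primrec.unpair) (Primrec.const 0)).to_comp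
  let Q : ℕ → ℚ := fun v => g (N v) (((1 : ℕ) : ℚ) / 2 ^ (v + 2))
  have hQ : Computable Q := hg.comp hN (rat_mk_computable.comp (Computable.const 1) (Computable.succ.comp Computable.succ))
  have hQe : ∀ v, |(Q v : ℝ) - (μ (EffOpen f (N v))).toReal| ≤ 1 / 2 ^ (v + 2) := by
    intro v
    have := hgε (N v) (((1 : ℕ) : ℚ) / 2 ^ (v + 2)) (by positivity)
    simpa [Q] using this
  have hsegc : ∀ t : ℕ → ℕ, Computable t → Computable (fun v => seg (f (N v)) (t v)) := fun t ht =>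
    seg_computable (fun v => f (N v)) (hf.comp (hN.comp Computable.fst) Computable.snd) t ht
  have hex : ∃ T : ℕ → ℕ, Computable T ∧ ∀ v, StageCond v (T v) (Q v).num.toNat (Q v).den (seg (f (N v)) (T v)) := by
    refine stage_search f hf N (fun v => (Q v).num.toNat) (fun v => (Q v).den) hN (rat_toNat_computable.comp hQ) (rat_den_computable.comp hQ) (fun v => ?_)
    · by_cases hk : v.unpair.2 = 0
      · exact ⟨0, Or.inl ⟨hk, rfl⟩⟩
      have hpos : (0 : ℝ) < 1 / 2 ^ (v + 2) := by positivity
      have h1 := (tendsto_seg μ f (N v)).eventually (lt_mem_nhds (sub_lt_self _ hpos))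
      obtain ⟨t, ht1, ht2⟩ := (h1.and (eventually_ge_atTop v.unpair.2)).exists
      refine ⟨t, Or.inr ⟨hk, ht2, ?_⟩⟩
      rw [cond_iff _ _ _ _ _ (Q v).den_pos, toNat_div_den, ← measure_Un_toReal μ hμ]
      have h2 := (abs_le.1 (hQe v)).2
      have h3 : (0 : ℝ) ≤ (μ (Un (seg (f (N v)) t))).toReal := ENNReal.toReal_nonneg
      have h4 : (2 : ℝ) / 2 ^ (v + 2) = 2 * (1 / 2 ^ (v + 2)) := by ring
      refine max_le ?_ (by positivity)
      linarith
  obtain ⟨T, hT, hT2⟩ := hex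
  -- quality of the stage
  have hqual : ∀ v, μ (EffOpen f (N v) \ Un (seg (f (N v)) (T v))) ≤ (2 : ENNReal)⁻¹ ^ v := by
    intro v
    rcases hT2 v with ⟨hk, ht⟩ | ⟨hk, -, hc⟩
    · refine (measure_mono Set.diff_subset).trans ((hfm _).trans (le_of_eq ?_))
      have : N v = v := by
        show Nat.pair v.unpair.1 0 = v
        rw [← hk, Nat.pair_unpair]
      rw [this]
    · rw [cond_iff _ _ _ _ _ (Q v).den_pos, toNat_div_den, ← measure_Un_toReal μ hμ] at hc
      have hsub : Un (seg (f (N v)) (T v)) ⊆ EffOpen f (N v) := by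
        intro α hα
        rw [mem_Un_seg] at hα
        obtain ⟨i, _, hi⟩ := hα
        exact Set.mem_iUnion.2 ⟨i, hi⟩
      rw [measure_diff hsub (measurable_Un _).nullMeasurableSet (measure_ne_top _ _)]
      rw [← ENNReal.toReal_le_toReal (by finiteness) (by simp), ENNReal.toReal_sub_of_le (measure_mono hsub) (measure_ne_top _ _)]
      have h2 := (abs_le.1 (hQe v)).1
      have h3 := le_max_left (Q v : ℝ) 0
      have h4 : (2 : ℝ) / 2 ^ (v + 2) = 2 * (1 / 2 ^ (v + 2)) := by ring
      have h5 : ((2 : ENNReal)⁻¹ ^ v).toReal = 4 * (1 / 2 ^ (v + 2)) := by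
        simp [pow_add]
        ring
      have hpos : (0 : ℝ) < 1 / 2 ^ (v + 2) := by positivity
      rw [h5]
      linarith
  let S : ℕ → ℕ := fun v => Nat.pair v.unpair.1 (v.unpair.2 + 1)
  have hS : Computable S := (Primrec₂.natPair.comp (Primrec.fst.comp Primrec.unpair) (Primrec.succ.comp (Primrec.snd.comp Primrec.unpair))).to_comp
  let B : ℕ → List (List Bool) := fun v => block (seg (f (N v)) (T (S v))) (seg (f (N v)) (T v))
  have hB : Computable B := block_primrec.to_comp.comp (hsegc _ (hT.comp hS)) (hsegc _ hT)
  have htot : TotalSolovayTest (flat B) := by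
    refine flat_total B hB fun v => ?_
    show ((block _ _).map _).sum ≤ _
    rw [block_weight, ← measure_diff_block μ hμ]
    refine (measure_mono ?_).trans (hqual v)
    refine Set.diff_subset_diff_left ?_
    intro α hα
    rw [mem_Un_seg] at hα
    obtain ⟨i, _, hi⟩ := hα
    exact Set.mem_iUnion.2 ⟨i, hi⟩
  have hpass : {q | PrefixOf (flat B q) ω}.Finite := hω _ htot
  have himg := hpass.image (fun q => q.unpair.1.unpair.1)
  refine Set.infinite_univ (himg.subset ?_)
  intro n _
  obtain ⟨i, hi⟩ := Set.mem_iUnion.1 (hall (Nat.pair n 0))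
  have hexk : ∃ k, ω ∈ Un (seg (f (Nat.pair n 0)) (T (Nat.pair n k))) := by
    refine ⟨i + 1, (mem_Un_seg _ _ _).2 ⟨i, ?_, hi⟩⟩
    rcases hT2 (Nat.pair n (i + 1)) with ⟨hk, -⟩ | ⟨-, hk, -⟩
    · simp at hk
    · simp only [Nat.unpair_pair] at hk; omega
  classical
  obtain ⟨k, hk1, hk2⟩ : ∃ k, ω ∈ Un (seg (f (Nat.pair n 0)) (T (Nat.pair n (k + 1)))) ∧ ω ∉ Un (seg (f (Nat.pair n 0)) (T (Nat.pair n k))) := by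
    have hspec := Nat.find_spec hexk
    have hmin := fun m => Nat.find_min hexk (m := m)
    cases hfk : Nat.find hexk with
    | zero =>
      exfalso
      rw [hfk, mem_Un_seg] at hspec
      obtain ⟨j, hj, _⟩ := hspec
      rcases hT2 (Nat.pair n 0) with ⟨-, h0⟩ | ⟨h0, -⟩
      · omega
      · simp at h0
    | succ k =>
      rw [hfk] at hspec
      exact ⟨k, hspec, hmin k (by omega)⟩
  have hmem : ω ∈ Un (seg (f (N (Nat.pair n k))) (T (S (Nat.pair n k)))) \ Un (seg (f (N (Nat.pair n k))) (T (Nat.pair n k))) := by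
    simp only [N, S, Nat.unpair_pair]
    exact ⟨hk1, hk2⟩
  rw [mem_diff_iff] at hmem
  obtain ⟨s, hs, hsω⟩ := hmem
  obtain ⟨p, hp, hps⟩ := List.getElem_of_mem hs
  refine ⟨Nat.pair (Nat.pair n k) p, ?_, by simp⟩
  have : flat B (Nat.pair (Nat.pair n k) p) = s := by
    have h1 : (B (Nat.pair n k))[p]? = some s := by
      rw [List.getElem?_eq_some_iff]; exact ⟨hp, hps⟩
    simp only [flat, Nat.unpair_pair, h1, Option.getD_some]
  show PrefixOf _ ω
  rw [this]
  exact hsω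

/-- `ω` is Schnorr random with respect to the uniform Bernoulli measure
iff it passes every total Solovay test. -/
theorem schnorr_random_iff_passes_all_total_solovay_tests
    (μ : Measure (ℕ → Bool)) (hμ : UniformMeasure μ) [IsProbabilityMeasure μ]
    (ω : ℕ → Bool) :
    SchnorrRandom μ ω ↔ ∀ x : ℕ → List Bool, TotalSolovayTest x → PassesSolovay x ω := by
  exact ⟨fun h x hx => dir1 μ hμ ω h x hx, dir2 μ hμ ω⟩
end

section
/- For every total Solovay test T there exists a computable unbounded nondecreasing function σ : ℕ → ℕ such that every infinite binary sequence ω satisfying Km(ω^n) ≥ n − σ(n) − O(1) for all n passes the test T. -/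
open MeasureTheory Filter

theorem ratEnc_aux (q : ℚ) : @Encodable.encode ℚ Rat.instDenumerable.toEncodable q =
    @List.countP ℕ (fun r => @decide (r ∈ Set.range (@Encodable.encode ℚ Rat.instEncodable)) (@Encodable.decidableRangeEncode ℚ Rat.instEncodable r)) (List.range (@Encodable.encode ℚ Rat.instEncodable q)) := rfl

theorem ratRaw (q : ℚ) : @Encodable.encode ℚ Rat.instEncodable q = Nat.pair (Encodable.encode q.num) q.den := rfl
theorem intEnc (z : ℤ) : (@Encodable.encode ℤ Int.encodable z) = Equiv.intEquivNat z := rfl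

def rP (r : ℕ) : Prop := 0 < r.unpair.2 ∧ ∀ c < r.unpair.2 + 1, ¬ (((r.unpair.1 + 1) / 2) % c = 0 ∧ r.unpair.2 % c = 0 ∧ c ≠ 1)

theorem rP_iff (r : ℕ) : rP r ↔ r ∈ Set.range (@Encodable.encode ℚ Rat.instEncodable) := by
  have key : rP r ↔ 0 < r.unpair.2 ∧ Nat.Coprime ((r.unpair.1+1)/2) r.unpair.2 := by
    unfold rP
    refine and_congr_right fun h => ?_
    rw [Nat.coprime_iff_gcd_eq_one] 
    constructor
    · intro H
      by_contra hg
      refine H (Nat.gcd ((r.unpair.1+1)/2) r.unpair.2) (Nat.lt_succ_of_le (Nat.gcd_le_right _ h)) ⟨?_, ?_, hg⟩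
      · exact Nat.mod_eq_zero_of_dvd (Nat.gcd_dvd_left _ _)
      · exact Nat.mod_eq_zero_of_dvd (Nat.gcd_dvd_right _ _)
    · rintro H c - ⟨h1, h2, h3⟩
      have := Nat.dvd_gcd (Nat.dvd_of_mod_eq_zero h1) (Nat.dvd_of_mod_eq_zero h2)
      rw [H] at this
      exact h3 (Nat.dvd_one.1 this)
  have hnat : ∀ z : ℤ, (Equiv.intEquivNat z + 1) / 2 = z.natAbs := by
    intro z
    rcases z with n | n
    · change (2 * n + 1)/2 = n
      omega
    · change (2 * n + 1 + 1)/2 = n + 1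
      omega
  rw [key]
  constructor
  · rintro ⟨h0, hc⟩
    have hz : Equiv.intEquivNat (Equiv.intEquivNat.symm r.unpair.1) = r.unpair.1 := by simp
    set z := Equiv.intEquivNat.symm r.unpair.1
    refine ⟨⟨z, r.unpair.2, h0.ne', ?_⟩, ?_⟩
    · rw [← hnat, hz]; exact hc
    · rw [ratRaw, intEnc]
      change Nat.pair (Equiv.intEquivNat z) r.unpair.2 = r
      rw [hz, Nat.pair_unpair]
  · rintro ⟨q, rfl⟩
    rw [ratRaw, intEnc, Nat.unpair_pair]
    simp only [hnat]
    exact ⟨q.den_pos, q.reduced⟩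

theorem rP_primrec : PrimrecPred rP := by
  have h1 : PrimrecPred fun r : ℕ => 0 < r.unpair.2 :=
    Primrec.nat_lt.comp (Primrec.const 0) (Primrec.snd.comp Primrec.unpair)
  have h2 : PrimrecRel fun c r : ℕ => ¬ (((r.unpair.1 + 1) / 2) % c = 0 ∧ r.unpair.2 % c = 0 ∧ c ≠ 1) := by
    have u1 : Primrec fun p : ℕ × ℕ => p.2.unpair.1 := Primrec.fst.comp (Primrec.unpair.comp Primrec.snd)
    have u2 : Primrec fun p : ℕ × ℕ => p.2.unpair.2 := Primrec.snd.comp (Primrec.unpair.comp Primrec.snd)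
    have a1 : PrimrecPred fun p : ℕ × ℕ => ((p.2.unpair.1 + 1) / 2) % p.1 = 0 :=
      Primrec.eq.comp (Primrec.nat_mod.comp (Primrec.nat_div.comp (Primrec.succ.comp u1) (Primrec.const 2)) Primrec.fst) (Primrec.const 0)
    have a2 : PrimrecPred fun p : ℕ × ℕ => p.2.unpair.2 % p.1 = 0 :=
      Primrec.eq.comp (Primrec.nat_mod.comp u2 Primrec.fst) (Primrec.const 0)
    have a3 : PrimrecPred fun p : ℕ × ℕ => p.1 = 1 :=
      Primrec.eq.comp Primrec.fst (Primrec.const 1)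
    exact (a1.and (a2.and a3.not)).not
  have h3 := h2.forall_lt
  have h4 : PrimrecPred fun r : ℕ => ∀ c < r.unpair.2 + 1, ¬ (((r.unpair.1 + 1) / 2) % c = 0 ∧ r.unpair.2 % c = 0 ∧ c ≠ 1) :=
    h3.comp (Primrec.succ.comp (Primrec.snd.comp Primrec.unpair)) Primrec.id
  exact h1.and h4

theorem ratInv_computable : Computable (fun d : ℕ => (((d + 1 : ℕ) : ℚ))⁻¹) := by
  rw [← Computable.encode_iff]
  classical
  have h : ∀ d : ℕ, @Encodable.encode ℚ Rat.instDenumerable.toEncodable ((((d + 1 : ℕ) : ℚ))⁻¹) =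
      ((List.range (Nat.pair 2 (d+1))).filter (fun r => decide (rP r))).length := by
    intro d
    have h1 : ((((d + 1 : ℕ) : ℚ))⁻¹).num = 1 := by
      simpa using Rat.inv_natCast_num_of_pos (Nat.succ_pos d)
    have h2 : ((((d + 1 : ℕ) : ℚ))⁻¹).den = d + 1 := by
      simpa using Rat.inv_natCast_den_of_pos (Nat.succ_pos d)
    rw [ratEnc_aux, ratRaw, h1, h2, List.countP_eq_length_filter]
    change (List.filter _ (List.range (Nat.pair 2 (d+1)))).length = _
    congr 2
    funext r
    exact decide_eq_decide.2 (rP_iff r).symm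
  refine Computable.of_eq ?_ (fun d => (h d).symm)
  refine Primrec.to_comp ?_
  exact Primrec.list_length.comp ((Primrec.listFilter rP_primrec).comp (Primrec.list_range.comp
    (Primrec₂.natPair.comp (Primrec.const 2) Primrec.succ)))
theorem exists_strictMono_ge (f : ℕ → ℕ) (hf : Computable f) :
    ∃ F : ℕ → ℕ, Computable F ∧ StrictMono F ∧ ∀ n, f n ≤ F n := by
  let F : ℕ → ℕ := fun n => Nat.rec (f 0) (fun k r => r + f (k + 1) + 1) n
  have hs : ∀ n, F (n + 1) = F n + f (n + 1) + 1 := fun n => rfl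
  refine ⟨F, ?_, strictMono_nat_of_lt_succ fun n => by rw [hs]; omega, ?_⟩
  · refine Computable.nat_rec (f := fun n : ℕ => n) (g := fun _ => f 0)
      (h := fun _ (p : ℕ × ℕ) => p.2 + f (p.1 + 1) + 1) Computable.id (Computable.const _) ?_
    have h2 : Computable fun q : ℕ × ℕ × ℕ => q.2.2 := Computable.snd.comp Computable.snd
    have h1 : Computable fun q : ℕ × ℕ × ℕ => f (q.2.1 + 1) :=
      hf.comp (Computable.succ.comp (Computable.fst.comp Computable.snd))
    exact Computable.succ.comp (Primrec.nat_add.to_comp.comp h2 h1)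
  · intro n
    cases n with
    | zero => exact le_rfl
    | succ n => rw [hs]; omega

theorem exists_inverse (F : ℕ → ℕ) (hF : Computable F) (hm : StrictMono F) :
    ∃ I : ℕ → ℕ, Computable I ∧ Monotone I ∧ (∀ n, n < F (I n + 1)) ∧
      (∀ n, I n = 0 ∨ F (I n) ≤ n) := by
  let I : ℕ → ℕ := fun n => Nat.rec 0
    (fun k r => bif decide (F (r + 1) ≤ k + 1) then r + 1 else r) n
  have hs : ∀ n, I (n + 1) = bif decide (F (I n + 1) ≤ n + 1) then I n + 1 else I n := fun n => rfl
  have h0 : I 0 = 0 := rfl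
  refine ⟨I, ?_, monotone_nat_of_le_succ fun n => ?_, ?_, ?_⟩
  · refine Computable.nat_rec (f := fun n : ℕ => n) (g := fun _ => 0)
      (h := fun _ (p : ℕ × ℕ) => bif decide (F (p.2 + 1) ≤ p.1 + 1) then p.2 + 1 else p.2)
      Computable.id (Computable.const _) ?_
    have h2 : Computable fun q : ℕ × ℕ × ℕ => q.2.2 := Computable.snd.comp Computable.snd
    have h1 : Computable fun q : ℕ × ℕ × ℕ => q.2.1 + 1 :=
      (Computable.succ.comp (Computable.fst.comp Computable.snd))
    have h3 : Computable fun q : ℕ × ℕ × ℕ => q.2.2 + 1 := Computable.succ.comp h2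
    have hle : Computable₂ fun a b : ℕ => decide (a ≤ b) := Primrec.nat_le.decide.to_comp
    exact Computable.cond (hle.comp (hF.comp h3) h1) h3 h2
  · rw [hs]
    cases decide (F (I n + 1) ≤ n + 1) <;> simp
  · intro n
    induction n with
    | zero =>
      have := hm (Nat.lt_succ_self (I 0))
      have := hm.id_le (I 0 + 1)
      simp only [id] at *
      omega
    | succ n ih =>
      rw [hs]
      by_cases h : F (I n + 1) ≤ n + 1
      · simp only [h, decide_true, cond_true]
        have := hm (Nat.lt_succ_self (I n + 1))
        simp only [Nat.succ_eq_add_one] at this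
        omega
      · simp only [h, decide_false, cond_false]
        omega
  · intro n
    induction n with
    | zero => exact Or.inl h0
    | succ n ih =>
      rw [hs]
      by_cases h : F (I n + 1) ≤ n + 1
      · simp only [h, decide_true, cond_true]
        right; trivial
      · simp only [h, decide_false, cond_false]
        omega

def bval (p : List Bool) : ℕ := p.foldl (fun v b => 2 * v + b.toNat) 0

theorem bval_concat (p : List Bool) (b : Bool) : bval (p ++ [b]) = 2 * bval p + b.toNat := by
  simp [bval, List.foldl_append]

theorem bval_computable : Computable bval := by
  refine Primrec.to_comp ?_
  refine Primrec.list_foldl (f := fun p : List Bool => p) (g := fun _ => 0)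
    (h := fun _ (q : ℕ × Bool) => 2 * q.1 + q.2.toNat) Primrec.id (Primrec.const 0) ?_
  have h1 : Primrec fun q : List Bool × ℕ × Bool => 2 * q.2.1 :=
    Primrec.nat_double.comp (Primrec.fst.comp Primrec.snd)
  have h2 : Primrec fun q : List Bool × ℕ × Bool => q.2.2.toNat :=
    (Primrec.dom_bool Bool.toNat).comp (Primrec.snd.comp Primrec.snd)
  exact Primrec.nat_add.comp h1 h2

theorem bval_append (p q : List Bool) :
    bval p * 2 ^ q.length ≤ bval (p ++ q) ∧ bval (p ++ q) + 1 ≤ (bval p + 1) * 2 ^ q.length := by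
  induction q using List.reverseRecOn with
  | nil => simp
  | append_singleton q b ih =>
    rw [← List.append_assoc, bval_concat, List.length_append, List.length_singleton, pow_succ]
    have : b.toNat ≤ 1 := Bool.toNat_le b
    constructor <;> nlinarith [ih.1, ih.2]

theorem bval_surj (L : ℕ) : ∀ a < 2 ^ L, ∃ p : List Bool, p.length = L ∧ bval p = a := by
  induction L with
  | zero => intro a ha; exact ⟨[], rfl, by simp at ha; simp [bval, ha]⟩
  | succ L ih =>
    intro a ha
    obtain ⟨p, hp, hv⟩ := ih (a / 2) (by rw [pow_succ] at ha; omega)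
    refine ⟨p ++ [decide (a % 2 = 1)], by simp [hp], ?_⟩
    rw [bval_concat, hv]
    by_cases h : a % 2 = 1
    · simp only [h, decide_true, Bool.toNat_true]; omega
    · simp only [h, decide_false, Bool.toNat_false]; omega

theorem kraft_code (Km : List Bool → ℕ) (hKm : IsKm Km) (ℓ : ℕ → ℕ) (hℓ : Computable ℓ)
    (y : ℕ → List Bool) (hy : Computable y)
    (hsum : ∀ N, ∑ j ∈ Finset.range N, ((2 : ℝ) ^ ℓ j)⁻¹ ≤ 1) :
    ∃ c : ℕ, ∀ n, Km (y n) ≤ ℓ n + c := by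
  obtain ⟨-, -, -, -, hopt⟩ := hKm
  let S : ℕ → ℝ := fun n => ∑ j ∈ Finset.range n, ((2 : ℝ) ^ ℓ j)⁻¹
  have hS : ∀ n, S (n + 1) = S n + ((2 : ℝ) ^ ℓ n)⁻¹ := fun n => Finset.sum_range_succ _ _
  have hSm : Monotone S := monotone_nat_of_le_succ fun n => by
    rw [hS]; have : (0:ℝ) < ((2 : ℝ) ^ ℓ n)⁻¹ := by positivity
    linarith
  -- pairs (T, D)
  let R : ℕ → ℕ × ℕ := fun n => Nat.rec (0, 1)
    (fun k r => (r.1 * 2 ^ ℓ k + r.2, r.2 * 2 ^ ℓ k)) n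
  have hR : ∀ n, R (n + 1) = ((R n).1 * 2 ^ ℓ n + (R n).2, (R n).2 * 2 ^ ℓ n) := fun n => rfl
  have hpow : Primrec fun n : ℕ => 2 ^ n := by
    have : Primrec₂ ((· ^ ·) : ℕ → ℕ → ℕ) := Primrec₂.unpaired'.1 Nat.Primrec.pow
    exact this.comp (Primrec.const 2) Primrec.id
  have hRc : Computable R := by
    refine Computable.nat_rec (f := fun n : ℕ => n) (g := fun _ => ((0, 1) : ℕ × ℕ))
      (h := fun _ (p : ℕ × ℕ × ℕ) => (p.2.1 * 2 ^ ℓ p.1 + p.2.2, p.2.2 * 2 ^ ℓ p.1))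
      Computable.id (Computable.const _) ?_
    have e : Computable fun q : ℕ × ℕ × ℕ × ℕ => 2 ^ ℓ q.2.1 :=
      hpow.to_comp.comp (hℓ.comp (Computable.fst.comp Computable.snd))
    have t : Computable fun q : ℕ × ℕ × ℕ × ℕ => q.2.2.1 :=
      Computable.fst.comp (Computable.snd.comp Computable.snd)
    have d : Computable fun q : ℕ × ℕ × ℕ × ℕ => q.2.2.2 :=
      Computable.snd.comp (Computable.snd.comp Computable.snd)
    have hmul := Primrec.nat_mul.to_comp
    have hadd := Primrec.nat_add.to_comp
    exact Computable.pair (hadd.comp (hmul.comp t e) d) (hmul.comp d e)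
  have hRS : ∀ n, 0 < (R n).2 ∧ ((R n).1 : ℝ) = S n * (R n).2 := by
    intro n
    induction n with
    | zero => simp [R, S]
    | succ n ih =>
      rw [hR]
      refine ⟨by have := ih.1; positivity, ?_⟩
      push_cast
      rw [hS, ih.2]
      field_simp
  let test : List Bool → ℕ → Bool := fun p n =>
    decide ((R n).1 * 2 ^ p.length ≤ bval p * (R n).2) &&
    decide ((bval p + 1) * (R (n+1)).2 ≤ (R (n+1)).1 * 2 ^ p.length)
  have htest : ∀ p n, test p n = true ↔
      S n * 2 ^ p.length ≤ bval p ∧ (bval p : ℝ) + 1 ≤ S (n+1) * 2 ^ p.length := by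
    intro p n
    have aux : ∀ (n : ℕ) , (0:ℝ) < (R n).2 := fun n => by exact_mod_cast (hRS n).1
    simp only [test, Bool.and_eq_true, decide_eq_true_eq]
    refine and_congr ?_ ?_
    · rw [← Nat.cast_le (α := ℝ)]
      push_cast
      rw [(hRS n).2, mul_right_comm, mul_le_mul_iff_left₀ (aux n)]
    · rw [← Nat.cast_le (α := ℝ)]
      push_cast
      rw [(hRS (n+1)).2, mul_right_comm (S (n+1)), mul_le_mul_iff_left₀ (aux (n+1))]
  have htc : Computable₂ test := by
    have hle : Computable₂ fun a b : ℕ => decide (a ≤ b) := Primrec.nat_le.decide.to_comp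
    have hmul := Primrec.nat_mul.to_comp
    have b : Computable fun q : List Bool × ℕ => bval q.1 := bval_computable.comp Computable.fst
    have l : Computable fun q : List Bool × ℕ => 2 ^ q.1.length :=
      hpow.to_comp.comp (Computable.list_length.comp Computable.fst)
    have r : Computable fun q : List Bool × ℕ => R q.2 := hRc.comp Computable.snd
    have r' : Computable fun q : List Bool × ℕ => R (q.2 + 1) :=
      hRc.comp (Computable.succ.comp Computable.snd)
    exact (Primrec.and.to_comp).comp
      (hle.comp (hmul.comp (Computable.fst.comp r) l) (hmul.comp b (Computable.snd.comp r)))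
      (hle.comp (hmul.comp (Computable.succ.comp b) (Computable.snd.comp r'))
        (hmul.comp (Computable.fst.comp r') l))
  have huniq : ∀ p q n n', p <+: q → test p n = true → test q n' = true → n = n' := by
    rintro p _ n n' ⟨q, rfl⟩ h h'
    rw [htest] at h h'
    obtain ⟨b1, b2⟩ := bval_append p q
    have b1 : (bval p : ℝ) * 2 ^ q.length ≤ bval (p ++ q) := by exact_mod_cast b1
    have b2 : (bval (p ++ q) : ℝ) + 1 ≤ (bval p + 1) * 2 ^ q.length := by exact_mod_cast b2
    rw [List.length_append, pow_add] at h'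
    have P : (0:ℝ) < 2 ^ p.length := by positivity
    have Q : (0:ℝ) < 2 ^ q.length := by positivity
    have c1 := mul_le_mul_of_nonneg_right h.1 Q.le
    have c2 := mul_le_mul_of_nonneg_right h.2 Q.le
    have PQ : (0:ℝ) < 2 ^ p.length * 2 ^ q.length := by positivity
    have d1 : S n < S (n' + 1) := by
      refine lt_of_mul_lt_mul_right (a := (2 ^ p.length * 2 ^ q.length : ℝ)) ?_ PQ.le
      linarith [h'.1, h'.2]
    have d2 : S n' < S (n + 1) := by
      refine lt_of_mul_lt_mul_right (a := (2 ^ p.length * 2 ^ q.length : ℝ)) ?_ PQ.le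
      linarith [h'.1, h'.2]
    have e1 := hSm.reflect_lt d1
    have e2 := hSm.reflect_lt d2
    omega
  let ψ : List Bool →. List Bool := fun p => (Nat.rfind (fun n => Part.some (test p n))).map y
  have hmem : ∀ p z, z ∈ ψ p → ∃ n, test p n = true ∧ y n = z := by
    intro p z hz
    obtain ⟨n, hn, rfl⟩ := (Part.mem_map_iff _).1 hz
    have := Nat.rfind_spec hn
    exact ⟨n, (Part.mem_some_iff.1 this).symm, rfl⟩
  have hψ : MonotoneMachine ψ := by
    refine ⟨?_, ?_⟩
    · exact Partrec.map (Partrec.rfind (p := fun p n => Part.some (test p n)) htc.partrec₂)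
        (hy.comp Computable.snd)
    · intro p p' z z' hz hz' hpp
      obtain ⟨n, hn, rfl⟩ := hmem _ _ hz
      obtain ⟨n', hn', rfl⟩ := hmem _ _ hz'
      rw [huniq _ _ _ _ hpp hn hn']
      exact Or.inl (List.prefix_refl _)
  obtain ⟨c, hc⟩ := hopt ψ hψ
  refine ⟨c + 1, fun n => ?_⟩
  have hS0 : 0 ≤ S n := Finset.sum_nonneg fun _ _ => by positivity
  have hS1 : S (n + 1) ≤ 1 := hsum (n + 1)
  set a := ⌊S n * 2 ^ (ℓ n + 1)⌋₊ + 1 with ha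
  have f1 : (⌊S n * 2 ^ (ℓ n + 1)⌋₊ : ℝ) ≤ S n * 2 ^ (ℓ n + 1) := Nat.floor_le (by positivity)
  have f2 : S n * 2 ^ (ℓ n + 1) < (⌊S n * 2 ^ (ℓ n + 1)⌋₊ : ℝ) + 1 := Nat.lt_floor_add_one _
  have f3 : S (n + 1) * 2 ^ (ℓ n + 1) = S n * 2 ^ (ℓ n + 1) + 2 := by
    rw [hS, add_mul, pow_succ]; field_simp
  have haR : (a : ℝ) = (⌊S n * 2 ^ (ℓ n + 1)⌋₊ : ℝ) + 1 := by rw [ha]; push_cast; ring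
  have f4 : S (n + 1) * 2 ^ (ℓ n + 1) ≤ 2 ^ (ℓ n + 1) := by
    have : (0:ℝ) < 2 ^ (ℓ n + 1) := by positivity
    nlinarith
  have hlt : a < 2 ^ (ℓ n + 1) := by
    have : (a : ℝ) < (2 : ℝ) ^ (ℓ n + 1) := by linarith
    exact_mod_cast this
  obtain ⟨p, hp, hv⟩ := bval_surj _ a hlt
  have ht : test p n = true := by
    rw [htest, hp, hv]
    constructor <;> linarith
  obtain ⟨n', hn', -⟩ := Nat.rfind_min' (p := test p) (m := n) ht
  have hyn : y n' ∈ ψ p := (Part.mem_map_iff _).2 ⟨n', hn', rfl⟩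
  have : n' = n := by
    have := Nat.rfind_spec hn'
    exact huniq p p n' n (List.prefix_refl _) (Part.mem_some_iff.1 this).symm ht
  subst this
  have := hc (y n') p (y n') hyn (List.prefix_refl _)
  omega

theorem pre_of_prefixOf (x : List Bool) (ω : ℕ → Bool) (h : PrefixOf x ω) :
    Pre ω x.length = x := by
  apply List.ext_getElem
  · simp [Pre]
  · intro i h1 h2
    simp only [Pre, List.getElem_map, List.getElem_range]
    exact h ⟨i, h2⟩

theorem test_weights (x : ℕ → List Bool) (hx : TotalSolovayTest x) :
    ∃ M : ℕ → ℕ, Computable M ∧ StrictMono M ∧ ∀ (k : ℕ) (s : Finset ℕ), (∀ n ∈ s, M k ≤ n) →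
      ∑ n ∈ s, (2 : ℝ) ^ (-((x n).length : ℤ)) ≤ ((8 : ℝ) ^ k)⁻¹ := by
  obtain ⟨⟨-, hsum⟩, m, hm, htail⟩ := hx
  have h8 : Primrec fun n : ℕ => 8 ^ n := by
    have : Primrec₂ ((· ^ ·) : ℕ → ℕ → ℕ) := Primrec₂.unpaired'.1 Nat.Primrec.pow
    exact this.comp (Primrec.const 8) Primrec.id
  have hδ : Computable fun k : ℕ => (((8 ^ k : ℕ) : ℚ))⁻¹ := by
    refine (ratInv_computable.comp (Computable.pred.comp h8.to_comp)).of_eq fun k => ?_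
    have : (8 ^ k).pred + 1 = 8 ^ k := Nat.succ_pred_eq_of_pos (by positivity)
    rw [this]
  obtain ⟨M, hM, hMs, hle⟩ := exists_strictMono_ge _ (hm.comp hδ)
  refine ⟨M, hM, hMs, fun k s hs => ?_⟩
  have ht := htail (((8 ^ k : ℕ) : ℚ))⁻¹ (by positivity)
  have hs' : ∀ n ∈ s, m (((8 ^ k : ℕ) : ℚ))⁻¹ ≤ n := fun n hn => (hle k).trans (hs n hn)
  rw [← Finset.sum_subtype_of_mem _ hs']
  refine (Summable.sum_le_tsum _ (fun _ _ => zpow_nonneg (by norm_num) _) (hsum.subtype _)).trans (ht.trans ?_)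
  push_cast
  exact le_rfl

/-- for every total Solovay test there is a computable unbounded
nondecreasing function `σ` such that every sequence `ω` with
`Km (ω^n) ≥ n - σ n - O(1)` passes the test. -/
theorem total_solovay_test_stability
    (Km : List Bool → ℕ) (hKm : IsKm Km)
    (x : ℕ → List Bool) (hx : TotalSolovayTest x) :
    ∃ σ : ℕ → ℕ, Computable σ ∧ Monotone σ ∧ (∀ k : ℕ, ∃ n, k ≤ σ n) ∧
      ∀ ω : ℕ → Bool,
        (∃ c : ℕ, ∀ n : ℕ, (n : ℤ) - σ n - c ≤ (Km (Pre ω n) : ℤ)) →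
        PassesSolovay x ω := by
  have hx0 := hx
  obtain ⟨⟨hxc, hsum⟩, -⟩ := hx0
  obtain ⟨M, hM, hMs, hw⟩ := test_weights x hx
  obtain ⟨K, hK, hKm', hK1, hK2⟩ := exists_inverse M hM hMs
  have hlen : Computable fun n => (x n).length := Computable.list_length.comp hxc
  obtain ⟨F, hF, hFs, hFle⟩ := exists_strictMono_ge _ hlen
  have hG : Computable fun j => F (M (j + 1)) := hF.comp (hM.comp Computable.succ)
  have hGs : StrictMono fun j => F (M (j + 1)) :=
    fun a b hab => hFs (hMs (Nat.succ_lt_succ hab))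
  obtain ⟨σ, hσ, hσm, hσ1, hσ2⟩ := exists_inverse _ hG hGs
  have h3 : ∀ n, 3 * K n ≤ (x n).length := by
    intro n
    rcases hK2 n with h | h
    · omega
    · have h1 := hw (K n) {n} (by simpa using h)
      rw [Finset.sum_singleton, zpow_neg, zpow_natCast, inv_le_inv₀ (by positivity) (by positivity)] at h1
      have h2 : (2 : ℝ) ^ (3 * K n) ≤ 2 ^ (x n).length := by
        rw [pow_mul]; norm_num; exact h1
      exact (pow_le_pow_iff_right₀ (by norm_num)).1 h2
  let w : ℕ → ℝ := fun n => (2 : ℝ) ^ (-((x n).length : ℤ))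
  have hw0 : ∀ n, 0 ≤ w n := fun n => by positivity
  have hbound : ∀ N, ∑ n ∈ Finset.range N, 4 ^ K n * w n ≤ ∑' n, w n + 2 := by
    intro N
    have s1 : ∑ n ∈ Finset.range N, 4 ^ K n * w n ≤
        ∑ n ∈ Finset.range N, ∑ j ∈ Finset.range (K N + 1),
          if j ≤ K n then 4 ^ j * w n else 0 := by
      refine Finset.sum_le_sum fun n hn => ?_
      have hm : K n ∈ Finset.range (K N + 1) := by
        have := hKm' (Finset.mem_range.1 hn).le
        simp; omega
      have := Finset.single_le_sum (f := fun j => if j ≤ K n then 4 ^ j * w n else 0)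
        (fun j _ => by split_ifs; exacts [mul_nonneg (by positivity) (hw0 n), le_rfl]) hm
      simpa using this
    refine s1.trans ?_
    rw [Finset.sum_comm, Finset.sum_range_succ', add_comm]
    refine add_le_add ?_ ?_
    · simpa using Summable.sum_le_tsum (Finset.range N) (fun n _ => hw0 n) hsum
    · have s2 : ∀ j ∈ Finset.range (K N), (∑ n ∈ Finset.range N,
          if j + 1 ≤ K n then 4 ^ (j + 1) * w n else 0) ≤ (1 / 2 : ℝ) ^ j := by
        intro j _
        rw [← Finset.sum_filter, ← Finset.mul_sum]
        have := hw (j + 1) ((Finset.range N).filter fun n => j + 1 ≤ K n) (by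
          intro n hn
          have h1 := (Finset.mem_filter.1 hn).2
          rcases hK2 n with h | h
          · omega
          · exact (hMs.monotone h1).trans h)
        refine (mul_le_mul_of_nonneg_left this (by positivity)).trans ?_
        rw [← inv_pow, ← mul_pow, pow_succ]
        norm_num
      refine (Finset.sum_le_sum s2).trans ?_
      exact (Summable.sum_le_tsum _ (fun _ _ => by positivity) summable_geometric_two).trans
        tsum_geometric_two.le
  obtain ⟨C, hC⟩ := pow_unbounded_of_one_lt (∑' n, w n + 2) (one_lt_two (α := ℝ))
  have hℓ : Computable fun n => (x n).length + C - 2 * K n :=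
    Primrec.nat_sub.to_comp.comp (Primrec.nat_add.to_comp.comp hlen (Computable.const C))
      (Primrec.nat_double.to_comp.comp hK)
  obtain ⟨c', hc'⟩ := kraft_code Km hKm _ hℓ x hxc (by
    intro N
    have e : ∀ n, ((2 : ℝ) ^ ((x n).length + C - 2 * K n))⁻¹ = (4 ^ K n * w n) / 2 ^ C := by
      intro n
      have h : (x n).length + C - 2 * K n + 2 * K n = (x n).length + C := by have := h3 n; omega
      have h4 : (4 : ℝ) ^ K n = 2 ^ (2 * K n) := by rw [pow_mul]; norm_num
      have h5 : (2 : ℝ) ^ ((x n).length + C - 2 * K n) * 2 ^ (2 * K n) =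
        2 ^ (x n).length * 2 ^ C := by rw [← pow_add, h, pow_add]
      simp only [w]
      rw [zpow_neg, zpow_natCast, h4]
      field_simp
      linarith
    simp only [e]
    rw [← Finset.sum_div, div_le_one (by positivity)]
    exact (hbound N).trans hC.le)
  refine ⟨σ, hσ, hσm, ?_, ?_⟩
  · intro k
    refine ⟨F (M (k + 1)), ?_⟩
    by_contra h
    have h1 := hσ1 (F (M (k + 1)))
    have h2 := hGs.monotone (show σ (F (M (k+1))) + 1 ≤ k by omega)
    omega
  · rintro ω ⟨c, hc⟩
    refine (Set.finite_Iio (M (c + C + c' + 1))).subset fun n hn => ?_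
    have hn : PrefixOf (x n) ω := hn
    have h1 := hc (x n).length
    rw [pre_of_prefixOf _ _ hn] at h1
    have h2 := hc' n
    have h3n := h3 n
    have hs : σ (x n).length ≤ K n := by
      by_contra h
      have a1 : F (M (σ (x n).length + 1)) ≤ (x n).length := by
        rcases hσ2 (x n).length with h' | h'
        · omega
        · exact h'
      have a2 : (x n).length ≤ F n := hFle n
      have a3 : F n < F (M (σ (x n).length + 1)) :=
        hFs ((hK1 n).trans_le (hMs.monotone (by omega)))
      omega
    have hk : K n ≤ c + C + c' := by omega
    exact (hK1 n).trans_le (hMs.monotone (by omega))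
end
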